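/- arXiv:1203.0676 — 4 statements merged into one kernel-verified Lean document; each statement's English description precedes it below -/
import Mathlib

section
/- Let ρ be a probability density on ℝ^d and ε > 0. Then the convolution ρ_ε = ρ * θ_ε is a smooth, strictly positive probability density and its Fisher information satisfies ∫_{ℝ^d} |∇ρ_ε(x)|² / ρ_ε(x) dx ≤ ε^{−4} ∫_{ℝ^d} |y|² θ_ε(y) dy = d ε^{−2}. -/
open MeasureTheory

/-- The rescaled Gaussian density `θ_ε(x) = ε^{-d} (2π)^{-d/2} exp(-|x/ε|²/2)` on `ℝ^d`. -/
noncomputable def gaussMollifier (d : ℕ) (ε : ℝ) (x : EuclideanSpace ℝ (Fin d)) : ℝ :=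
  ε ^ (-(d : ℝ)) * (2 * Real.pi) ^ (-(d : ℝ) / 2) * Real.exp (-(‖x‖ ^ 2 / ε ^ 2) / 2)

/-- The mollification `ρ_ε = ρ * θ_ε`, i.e. `(ρ * θ_ε)(x) = ∫ ρ(x - y) θ_ε(y) dy`. -/
noncomputable def mollify (d : ℕ) (ρ : EuclideanSpace ℝ (Fin d) → ℝ) (ε : ℝ)
    (x : EuclideanSpace ℝ (Fin d)) : ℝ :=
  ∫ y, ρ (x - y) * gaussMollifier d ε y


open scoped FourierTransform

/-- Convolution of an integrable function with a smooth one with bounded derivatives. -/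
theorem MollAux.hasFDerivAt {E F : Type} [NormedAddCommGroup E] [NormedSpace ℝ E]
    [FiniteDimensional ℝ E] [MeasurableSpace E] [BorelSpace E] (μ : Measure E)
    [NormedAddCommGroup F] [NormedSpace ℝ F] [CompleteSpace F]
    (ρ : E → ℝ) (hρ : Integrable ρ μ) (g : E → F) (hg : ContDiff ℝ 1 g)
    (C0 C1 : ℝ) (h0 : ∀ x, ‖g x‖ ≤ C0) (h1 : ∀ x, ‖fderiv ℝ g x‖ ≤ C1) (x : E) :
    HasFDerivAt (fun x => ∫ t, ρ t • g (x - t) ∂μ) (∫ t, ρ t • fderiv ℝ g (x - t) ∂μ) x := by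
  have hgc : Continuous g := hg.continuous
  have hgc' : Continuous (fderiv ℝ g) := hg.continuous_fderiv (by simp)
  have hm : ∀ x, AEStronglyMeasurable (fun t => ρ t • g (x - t)) μ := fun x =>
    hρ.aestronglyMeasurable.smul (by fun_prop : Continuous fun t => g (x - t)).aestronglyMeasurable
  refine hasFDerivAt_integral_of_dominated_of_fderiv_le (F := fun x t => ρ t • g (x - t))
    (F' := fun x t => ρ t • fderiv ℝ g (x - t)) (bound := fun t => ‖ρ t‖ * C1)
    (s := Set.univ) Filter.univ_mem (Filter.Eventually.of_forall hm) ?_ ?_ ?_ ?_ ?_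
  · refine (hρ.norm.mul_const C0).mono' (hm x) (Filter.Eventually.of_forall fun t => ?_)
    rw [norm_smul]
    exact mul_le_mul_of_nonneg_left (h0 _) (norm_nonneg _)
  · exact hρ.aestronglyMeasurable.smul
      (by fun_prop : Continuous fun t => fderiv ℝ g (x - t)).aestronglyMeasurable
  · refine Filter.Eventually.of_forall fun t x _ => ?_
    rw [norm_smul]
    exact mul_le_mul_of_nonneg_left (h1 _) (norm_nonneg _)
  · exact hρ.norm.mul_const C1
  · refine Filter.Eventually.of_forall fun t x _ => ?_
    have h := (hg.differentiable (by simp) (x - t)).hasFDerivAt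
    have h2 : HasFDerivAt (fun x => x - t) (ContinuousLinearMap.id ℝ E) x :=
      (hasFDerivAt_id x).sub_const t
    have := (h.comp x h2).const_smul (ρ t)
    rw [ContinuousLinearMap.comp_id] at this
    exact this

theorem MollAux.contDiff {E : Type} [NormedAddCommGroup E] [NormedSpace ℝ E]
    [FiniteDimensional ℝ E] [MeasurableSpace E] [BorelSpace E] (μ : Measure E)
    (ρ : E → ℝ) (hρ : Integrable ρ μ) (n : ℕ) : ∀ (F : Type)
    [NormedAddCommGroup F] [NormedSpace ℝ F] [CompleteSpace F] (g : E → F)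
    (_ : ContDiff ℝ (⊤ : ℕ∞) g)
    (_ : ∀ k : ℕ, ∃ C, ∀ x, ‖iteratedFDeriv ℝ k g x‖ ≤ C),
    ContDiff ℝ n (fun x => ∫ t, ρ t • g (x - t) ∂μ) := by
  have key : ∀ (F : Type) [NormedAddCommGroup F] [NormedSpace ℝ F] [CompleteSpace F] (g : E → F)
    (_ : ContDiff ℝ (⊤ : ℕ∞) g)
    (_ : ∀ k : ℕ, ∃ C, ∀ x, ‖iteratedFDeriv ℝ k g x‖ ≤ C), ∀ x,
    HasFDerivAt (fun x => ∫ t, ρ t • g (x - t) ∂μ) (∫ t, ρ t • fderiv ℝ g (x - t) ∂μ) x := by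
    intro F _ _ _ g hg hb x
    obtain ⟨C0, h0⟩ := hb 0
    obtain ⟨C1, h1⟩ := hb 1
    refine MollAux.hasFDerivAt μ ρ hρ g (hg.of_le (by exact_mod_cast le_top)) C0 C1 ?_ ?_ x
    · simpa using h0
    · simpa using h1
  induction n with
  | zero =>
    intro F _ _ _ g hg hb
    rw [Nat.cast_zero, contDiff_zero]
    exact continuous_iff_continuousAt.2 fun x => (key F g hg hb x).continuousAt
  | succ n ih =>
    intro F _ _ _ g hg hb
    rw [Nat.cast_succ, contDiff_succ_iff_hasFDerivAt]
    refine ⟨_, ih (E →L[ℝ] F) (fderiv ℝ g) ?_ ?_, key F g hg hb⟩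
    · exact (contDiff_infty_iff_fderiv.1 hg).2
    · intro k
      obtain ⟨C, h⟩ := hb (k + 1)
      exact ⟨C, fun x => by rw [norm_iteratedFDeriv_fderiv]; exact h x⟩

theorem MollAux.integrable_moment (d : ℕ) (b : ℝ) (hb : 0 < b) (n : ℕ) :
    Integrable (fun x : EuclideanSpace ℝ (Fin d) => ‖x‖ ^ n * Real.exp (-b * ‖x‖ ^ 2)) := by
  rcases Nat.eq_zero_or_pos d with rfl | hd
  · have : Finite (EuclideanSpace ℝ (Fin 0)) := Finite.of_subsingleton
    exact Integrable.of_finite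
  · have : Nonempty (Fin d) := ⟨⟨0, hd⟩⟩
    have := integrable_fun_norm_addHaar (volume : Measure (EuclideanSpace ℝ (Fin d)))
      (f := fun r => r ^ n * Real.exp (-b * r ^ 2))
    rw [this]
    have h2 := integrableOn_rpow_mul_exp_neg_mul_sq hb (s := ((d - 1 + n : ℕ) : ℝ))
      (lt_of_lt_of_le (by norm_num) (Nat.cast_nonneg _))
    simp only [Real.rpow_natCast] at h2
    simpa [pow_add, mul_assoc] using h2

theorem MollAux.integral_moment_two (d : ℕ) (b : ℝ) (hb : 0 < b) :
    ∫ x : EuclideanSpace ℝ (Fin d), ‖x‖ ^ 2 * Real.exp (-b * ‖x‖ ^ 2) =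
      d / (2 * b) * ∫ x : EuclideanSpace ℝ (Fin d), Real.exp (-b * ‖x‖ ^ 2) := by
  rcases Nat.eq_zero_or_pos d with rfl | hd
  · have : ∀ x : EuclideanSpace ℝ (Fin 0), ‖x‖ = 0 := fun x => by
      rw [Subsingleton.elim x 0, norm_zero]
    simp [this]
  · have : Nonempty (Fin d) := ⟨⟨0, hd⟩⟩
    have e1 := integral_fun_norm_addHaar (volume : Measure (EuclideanSpace ℝ (Fin d)))
      (fun r => r ^ 2 * Real.exp (-b * r ^ 2))
    have e0 := integral_fun_norm_addHaar (volume : Measure (EuclideanSpace ℝ (Fin d)))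
      (fun r => Real.exp (-b * r ^ 2))
    rw [e1, e0]
    have hd' : (0 : ℝ) < d := by exact_mod_cast hd
    have i0 := integral_rpow_mul_exp_neg_mul_rpow (p := 2) (q := ((d - 1 : ℕ) : ℝ)) two_pos
      (lt_of_lt_of_le (by norm_num) (Nat.cast_nonneg _)) hb
    have i1 := integral_rpow_mul_exp_neg_mul_rpow (p := 2) (q := ((d - 1 + 2 : ℕ) : ℝ)) two_pos
      (lt_of_lt_of_le (by norm_num) (Nat.cast_nonneg _)) hb
    simp only [Real.rpow_natCast, Real.rpow_two] at i0 i1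
    have c0 : ((d - 1 : ℕ) : ℝ) + 1 = d := by
      rw [Nat.cast_sub hd]; simp
    have c1 : ((d - 1 + 2 : ℕ) : ℝ) + 1 = d + 2 := by
      rw [Nat.cast_add, Nat.cast_sub hd]; push_cast; ring
    rw [c0] at i0
    rw [c1, show ((d : ℝ) + 2) / 2 = d / 2 + 1 by ring, Real.Gamma_add_one (by positivity),
      show -((d : ℝ) + 2) / 2 = -d / 2 - 1 by ring, Real.rpow_sub hb, Real.rpow_one] at i1
    simp only [finrank_euclideanSpace, Fintype.card_fin, smul_eq_mul, nsmul_eq_mul]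
    have i1' : ∫ y in Set.Ioi (0 : ℝ), y ^ (d - 1) * (y ^ 2 * Real.exp (-b * y ^ 2)) =
      ∫ y in Set.Ioi (0 : ℝ), y ^ (d - 1 + 2) * Real.exp (-b * y ^ 2) := by
      congr 1; ext y; ring
    rw [i1', i0, i1]
    field_simp

theorem MollAux.gauss_bdd (d : ℕ) (c b : ℝ) (hb : 0 < b) (k : ℕ) :
    ∃ C, ∀ x, ‖iteratedFDeriv ℝ k
      (fun x : EuclideanSpace ℝ (Fin d) => c * Real.exp (-b * ‖x‖ ^ 2)) x‖ ≤ C := by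
  have hπ := Real.pi_pos
  set B : ℝ := Real.pi ^ 2 / b with hB
  have hBp : 0 < B := by positivity
  set f : EuclideanSpace ℝ (Fin d) → ℂ := fun v => Complex.exp (-(B : ℂ) * ‖v‖ ^ 2) with hf
  have hfn : ∀ v, ‖f v‖ = Real.exp (-B * ‖v‖ ^ 2) := by
    intro v
    rw [hf]
    simp only [Complex.norm_exp]
    congr 1
    rw [← Complex.ofReal_pow, ← Complex.ofReal_neg, ← Complex.ofReal_mul, Complex.ofReal_re]
  have hfc : Continuous f := by rw [hf]; fun_prop
  have hint : ∀ n : ℕ, Integrable (fun v => ‖v‖ ^ n * ‖f v‖) := by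
    intro n
    simp only [hfn]
    exact MollAux.integrable_moment d B hBp n
  set K : ℂ := (Real.pi / (B : ℂ)) ^ (Module.finrank ℝ (EuclideanSpace ℝ (Fin d)) / 2 : ℂ) with hK
  have hK0 : K ≠ 0 := by
    rw [hK, Complex.cpow_def_of_ne_zero]
    · exact Complex.exp_ne_zero _
    · rw [← Complex.ofReal_div]; exact_mod_cast (by positivity : Real.pi / B ≠ 0)
  have hF : ∀ w, 𝓕 f w = K * (Real.exp (-b * ‖w‖ ^ 2) : ℝ) := by
    intro w
    rw [hf, fourier_gaussian_innerProductSpace (b := (B : ℂ)) (by simpa using hBp)]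
    congr 1
    push_cast
    congr 1
    rw [hB]
    have : (b : ℂ) ≠ 0 := by exact_mod_cast hb.ne'
    have : (Real.pi : ℂ) ≠ 0 := by exact_mod_cast hπ.ne'
    push_cast
    field_simp
  set L : ℂ →L[ℝ] ℝ := Complex.reCLM ∘L (ContinuousLinearMap.mul ℝ ℂ ((c : ℂ) * K⁻¹)) with hL
  have hfun : (fun x : EuclideanSpace ℝ (Fin d) => c * Real.exp (-b * ‖x‖ ^ 2)) = L ∘ (𝓕 f) := by
    ext x
    have : L (𝓕 f x) = ((c : ℂ) * K⁻¹ * 𝓕 f x).re := rfl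
    rw [Function.comp_apply, this, hF, mul_assoc, inv_mul_cancel_left₀ hK0, ← Complex.ofReal_mul,
      Complex.ofReal_re]
  have hcd : ContDiff ℝ (⊤ : ℕ∞) (𝓕 f) := Real.contDiff_fourier (fun n _ => hint n)
  have hbd := Real.pow_mul_norm_iteratedFDeriv_fourier_le (f := f) (K := ⊤) (N := 0)
    (by simpa using hfc) (by
      intro k n _ hn
      have : n = 0 := by simpa using hn
      subst this
      simpa using hint k) (k := k) (n := 0) le_top le_rfl
  simp only [pow_zero, one_mul] at hbd
  rw [hfun]
  exact ⟨_, fun x => (L.norm_iteratedFDeriv_comp_left (n := k) hcd.contDiffAt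
    (by exact_mod_cast le_top)).trans (mul_le_mul_of_nonneg_left (hbd x) (norm_nonneg _))⟩

theorem MollAux.norm_fderiv_gauss (d : ℕ) (c b : ℝ) (hc : 0 ≤ c) (hb : 0 < b)
    (x : EuclideanSpace ℝ (Fin d)) :
    ‖fderiv ℝ (fun x : EuclideanSpace ℝ (Fin d) => c * Real.exp (-b * ‖x‖ ^ 2)) x‖ ≤
      2 * b * (‖x‖ * (c * Real.exp (-b * ‖x‖ ^ 2))) := by
  have h1 := (hasStrictFDerivAt_norm_sq (F := EuclideanSpace ℝ (Fin d)) x).hasFDerivAt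
  have h2 := (((h1.const_mul (-b)).exp).const_mul c).fderiv
  rw [h2, norm_smul, norm_smul, norm_smul]
  have h3 : ‖(2 • innerSL ℝ x : EuclideanSpace ℝ (Fin d) →L[ℝ] ℝ)‖ ≤ 2 * ‖x‖ := by
    rw [two_smul]
    refine (norm_add_le _ _).trans ?_
    rw [innerSL_apply_norm]; linarith
  rw [Real.norm_of_nonneg hc, Real.norm_of_nonneg (Real.exp_pos _).le, norm_neg,
    Real.norm_of_nonneg hb.le]
  calc _ ≤ c * (Real.exp (-b * ‖x‖ ^ 2) * (b * (2 * ‖x‖))) := by gcongr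
    _ = _ := by ring

/-- The abstract estimate for a Gaussian kernel `c * exp (-b |x|^2)` of mass one. -/
theorem MollAux.main (d : ℕ) (ρ : EuclideanSpace ℝ (Fin d) → ℝ) (c b : ℝ) (hc : 0 < c)
    (hb : 0 < b) (θ : EuclideanSpace ℝ (Fin d) → ℝ)
    (hθ : θ = fun x => c * Real.exp (-b * ‖x‖ ^ 2)) (hθ1 : ∫ x, θ x = 1)
    (m : EuclideanSpace ℝ (Fin d) → ℝ) (hm : ∀ x, m x = ∫ t, ρ t * θ (x - t))
    (hρ_nonneg : ∀ x, 0 ≤ ρ x)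
    (hρ_int : Integrable ρ) (hρ_mass : ∫ x, ρ x = 1) :
    ContDiff ℝ (⊤ : ℕ∞) m ∧ (∀ x, 0 < m x) ∧ Integrable m ∧ (∫ x, m x) = 1 ∧
    (∫⁻ x, ENNReal.ofReal (‖gradient m x‖ ^ 2 / m x)) ≤
      ENNReal.ofReal ((2 * b) ^ 2 * ∫ y, ‖y‖ ^ 2 * θ y) := by
  have hm' : m = fun x => ∫ t, ρ t • θ (x - t) := by ext x; simpa using hm x
  have hθs : ContDiff ℝ (⊤ : ℕ∞) θ := by
    rw [hθ]
    exact contDiff_const.mul ((contDiff_const.mul (contDiff_norm_sq ℝ)).exp)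
  have hθb : ∀ k : ℕ, ∃ C, ∀ x, ‖iteratedFDeriv ℝ k θ x‖ ≤ C := by
    rw [hθ]; exact MollAux.gauss_bdd d c b hb
  have hθc : Continuous θ := hθs.continuous
  have hθp : ∀ x, 0 < θ x := fun x => by rw [hθ]; exact mul_pos hc (Real.exp_pos _)
  obtain ⟨C0, hC0⟩ := hθb 0
  obtain ⟨C1, hC1⟩ := hθb 1
  simp only [norm_iteratedFDeriv_zero, norm_iteratedFDeriv_one] at hC0 hC1
  have hsmooth : ContDiff ℝ (⊤ : ℕ∞) m := by
    rw [contDiff_infty, hm']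
    exact fun n => MollAux.contDiff volume ρ hρ_int n ℝ θ hθs hθb
  have hmom : ∀ n : ℕ, Integrable (fun x => ‖x‖ ^ n * θ x) := by
    intro n
    have := (MollAux.integrable_moment d b hb n).const_mul c
    rw [hθ]
    refine this.congr (Filter.Eventually.of_forall fun x => ?_)
    simp only; ring
  have hθi : Integrable θ := by simpa using hmom 0
  -- second moments are bounded
  have hC2 : ∀ x, ‖‖x‖ ^ 2 * θ x‖ ≤ c / b := by
    intro x
    rw [Real.norm_of_nonneg (mul_nonneg (by positivity) (hθp x).le), hθ]
    have h1 : b * ‖x‖ ^ 2 * Real.exp (-(b * ‖x‖ ^ 2)) ≤ 1 := by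
      rw [Real.exp_neg, ← div_eq_mul_inv, div_le_one (Real.exp_pos _)]
      linarith [Real.add_one_le_exp (b * ‖x‖ ^ 2)]
    rw [le_div_iff₀ hb]
    calc _ = c * (b * ‖x‖ ^ 2 * Real.exp (-(b * ‖x‖ ^ 2))) := by
            simp only [neg_mul]; ring
      _ ≤ c * 1 := by gcongr
      _ = c := mul_one c
  have hbi : ∀ (g : EuclideanSpace ℝ (Fin d) → ℝ) (_ : Continuous g) (C : ℝ)
      (_ : ∀ x, ‖g x‖ ≤ C) (x), Integrable (fun t => ρ t * g (x - t)) := by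
    intro g hg C hC x
    refine hρ_int.mul_bdd (c := C) ?_ (Filter.Eventually.of_forall fun t => hC _)
    exact (by fun_prop : Continuous fun t => g (x - t)).aestronglyMeasurable
  have hI0 := hbi θ hθc C0 hC0
  have hI2 := hbi (fun x => ‖x‖ ^ 2 * θ x) (by fun_prop) _ hC2
  have hI1 : ∀ x, Integrable (fun t => ρ t * (‖x - t‖ * θ (x - t))) := by
    refine hbi (fun x => ‖x‖ * θ x) (by fun_prop) (C0 + c / b) fun x => ?_
    have h0 := hC0 x
    have h2 := hC2 x
    rw [Real.norm_of_nonneg (mul_nonneg (by positivity) (hθp x).le)] at h2 ⊢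
    rw [Real.norm_of_nonneg (hθp x).le] at h0
    have h3 : ‖x‖ ≤ 1 + ‖x‖ ^ 2 := by nlinarith [sq_nonneg (‖x‖ - 1 / 2)]
    nlinarith [mul_le_mul_of_nonneg_right h3 (hθp x).le]
  have hpos : ∀ x, 0 < m x := by
    intro x
    rw [hm]
    have hnn : ∀ t, 0 ≤ ρ t * θ (x - t) := fun t => mul_nonneg (hρ_nonneg t) (hθp _).le
    refine lt_of_le_of_ne (integral_nonneg hnn) fun h0 => ?_
    have h1 := (integral_eq_zero_iff_of_nonneg hnn (hI0 x)).1 h0.symm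
    have h2 : ρ =ᵐ[volume] 0 := by
      filter_upwards [h1] with t ht
      exact (mul_eq_zero.1 ht).resolve_right (hθp _).ne'
    rw [integral_congr_ae h2] at hρ_mass
    simp at hρ_mass
  -- convolution facts
  have hconv : ∀ g : EuclideanSpace ℝ (Fin d) → ℝ, Integrable g →
      Integrable (fun x => ∫ t, ρ t * g (x - t)) ∧
      ∫ x, ∫ t, ρ t * g (x - t) = ∫ y, g y := by
    intro g hg
    refine ⟨hρ_int.integrable_convolution (ContinuousLinearMap.mul ℝ ℝ) hg, ?_⟩
    have := integral_convolution (ContinuousLinearMap.mul ℝ ℝ) hρ_int hg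
    rw [hρ_mass] at this
    simpa [convolution] using this
  have hmf : m = fun x => ∫ t, ρ t * θ (x - t) := funext hm
  refine ⟨hsmooth, hpos, ?_, ?_, ?_⟩
  · rw [hmf]; exact (hconv θ hθi).1
  · rw [hmf, (hconv θ hθi).2, hθ1]
  set M : EuclideanSpace ℝ (Fin d) → ℝ :=
    fun x => ∫ t, ρ t * (‖x - t‖ ^ 2 * θ (x - t)) with hM
  obtain ⟨hMi, hMe⟩ := hconv _ (hmom 2)
  have hM0 : ∀ x, 0 ≤ M x := fun x => integral_nonneg fun t =>
    mul_nonneg (hρ_nonneg t) (mul_nonneg (by positivity) (hθp _).le)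
  have hpt : ∀ x, ‖gradient m x‖ ^ 2 / m x ≤ (2 * b) ^ 2 * M x := by
    intro x
    set N : ℝ := ∫ t, ρ t * (‖x - t‖ * θ (x - t)) with hN
    have hN0 : 0 ≤ N := integral_nonneg fun t =>
      mul_nonneg (hρ_nonneg t) (mul_nonneg (norm_nonneg _) (hθp _).le)
    have hg : ‖gradient m x‖ ≤ 2 * b * N := by
      have h1 : ‖gradient m x‖ = ‖fderiv ℝ m x‖ := by
        rw [gradient, LinearIsometryEquiv.norm_map]
      rw [h1, hm', (MollAux.hasFDerivAt volume ρ hρ_int θ (hθs.of_le (by exact_mod_cast le_top))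
        C0 C1 hC0 hC1 x).fderiv, hN, ← integral_const_mul]
      refine norm_integral_le_of_norm_le ((hI1 x).const_mul _)
        (Filter.Eventually.of_forall fun t => ?_)
      rw [norm_smul, Real.norm_of_nonneg (hρ_nonneg t)]
      have h2 := MollAux.norm_fderiv_gauss d c b hc.le hb (x - t)
      have h3 : θ (x - t) = c * Real.exp (-b * ‖x - t‖ ^ 2) := by rw [hθ]
      rw [← hθ, ← h3] at h2
      calc _ ≤ ρ t * (2 * b * (‖x - t‖ * θ (x - t))) :=
            mul_le_mul_of_nonneg_left h2 (hρ_nonneg t)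
        _ = _ := by ring
    have hcs : N ^ 2 ≤ m x * M x := by
      set k : ℝ := N / m x with hk
      have h1 : 2 * k * N ≤ M x + k ^ 2 * m x := by
        rw [hm, hN, hM, ← integral_const_mul, ← integral_const_mul,
          ← integral_add (hI2 x) ((hI0 x).const_mul _)]
        refine integral_mono ((hI1 x).const_mul _) ((hI2 x).add ((hI0 x).const_mul _)) fun t => ?_
        have : 0 ≤ ρ t * θ (x - t) * (‖x - t‖ - k) ^ 2 :=
          mul_nonneg (mul_nonneg (hρ_nonneg t) (hθp _).le) (sq_nonneg _)
        simp only [Pi.add_apply]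
        nlinarith
      have hkN : k * m x = N := div_mul_cancel₀ _ (hpos x).ne'
      nlinarith [mul_le_mul_of_nonneg_left h1 (hpos x).le, hpos x]
    rw [div_le_iff₀ (hpos x)]
    calc _ ≤ (2 * b * N) ^ 2 := by gcongr
      _ = (2 * b) ^ 2 * N ^ 2 := by ring
      _ ≤ (2 * b) ^ 2 * (m x * M x) := by gcongr
      _ = _ := by ring
  calc _ ≤ ∫⁻ x, ENNReal.ofReal ((2 * b) ^ 2 * M x) :=
        lintegral_mono fun x => ENNReal.ofReal_le_ofReal (hpt x)
    _ = ENNReal.ofReal (∫ x, (2 * b) ^ 2 * M x) := by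
        rw [ofReal_integral_eq_lintegral_ofReal (hMi.const_mul _)]
        exact Filter.Eventually.of_forall fun x => mul_nonneg (by positivity) (hM0 x)
    _ = _ := by rw [integral_const_mul, hMe]

/-- If `ρ` is a probability density on `ℝ^d` and `ε > 0`, then
`ρ_ε = ρ * θ_ε` is a smooth, strictly positive probability density whose Fisher
information satisfies `∫ |∇ρ_ε|²/ρ_ε ≤ ε⁻⁴ ∫ |y|² θ_ε(y) dy = d ε⁻²`. -/
theorem mollify_fisher_bound (d : ℕ) (ρ : EuclideanSpace ℝ (Fin d) → ℝ) (ε : ℝ) (hε : 0 < ε)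
    (hρ_meas : Measurable ρ) (hρ_nonneg : ∀ x, 0 ≤ ρ x)
    (hρ_int : Integrable ρ) (hρ_mass : ∫ x, ρ x = 1) :
    ContDiff ℝ (⊤ : ℕ∞) (mollify d ρ ε) ∧ (∀ x, 0 < mollify d ρ ε x) ∧
    Integrable (mollify d ρ ε) ∧ (∫ x, mollify d ρ ε x) = 1 ∧
    (∫⁻ x, ENNReal.ofReal (‖gradient (mollify d ρ ε) x‖ ^ 2 / mollify d ρ ε x)) ≤
      ENNReal.ofReal (ε ^ (-4 : ℤ) * ∫ y, ‖y‖ ^ 2 * gaussMollifier d ε y) ∧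
    ε ^ (-4 : ℤ) * (∫ y, ‖y‖ ^ 2 * gaussMollifier d ε y) = d * ε ^ (-2 : ℤ) := by
  set c : ℝ := ε ^ (-(d : ℝ)) * (2 * Real.pi) ^ (-(d : ℝ) / 2) with hc
  set b : ℝ := 1 / (2 * ε ^ 2) with hb
  have hπ := Real.pi_pos
  have hcp : 0 < c := by positivity
  have hbp : 0 < b := by positivity
  have hθ : gaussMollifier d ε = fun x => c * Real.exp (-b * ‖x‖ ^ 2) := by
    ext x
    rw [gaussMollifier, hb, hc]
    congr 2
    field_simp
  have hmass : ∫ x, gaussMollifier d ε x = 1 := by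
    rw [hθ, integral_const_mul, GaussianFourier.integral_rexp_neg_mul_sq_norm hbp, hc, hb,
      finrank_euclideanSpace, Fintype.card_fin,
      show Real.pi / (1 / (2 * ε ^ 2)) = ε ^ (2 : ℝ) * (2 * Real.pi) by
        rw [Real.rpow_two]; field_simp,
      Real.mul_rpow (x := ε ^ (2 : ℝ)) (by positivity) (by positivity), ← Real.rpow_mul hε.le,
      show (2 : ℝ) * (d / 2) = d by ring, neg_div, Real.rpow_neg hε.le,
      Real.rpow_neg (by positivity)]
    field_simp
  have hm : ∀ x, mollify d ρ ε x = ∫ t, ρ t * gaussMollifier d ε (x - t) := by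
    intro x
    rw [mollify, ← integral_sub_left_eq_self _ volume x]
    simp
  obtain ⟨h1, h2, h3, h4, h5⟩ := MollAux.main d ρ c b hcp hbp _ hθ hmass _ hm hρ_nonneg
    hρ_int hρ_mass
  have hbb : (2 * b) ^ 2 = ε ^ (-4 : ℤ) := by
    rw [hb, zpow_neg]
    norm_cast
    field_simp
  refine ⟨h1, h2, h3, h4, hbb ▸ h5, ?_⟩
  have h6 : ∫ y, ‖y‖ ^ 2 * gaussMollifier d ε y = d / (2 * b) := by
    have e : ∀ y, ‖y‖ ^ 2 * gaussMollifier d ε y = c * (‖y‖ ^ 2 * Real.exp (-b * ‖y‖ ^ 2)) := by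
      intro y; rw [hθ]; ring
    have hmass' := hmass
    rw [hθ, integral_const_mul] at hmass'
    simp_rw [e]
    rw [integral_const_mul, MollAux.integral_moment_two d b hbp, mul_left_comm, hmass', mul_one]
  rw [h6, ← hbb, hb, zpow_neg]
  norm_cast
  field_simp
end

section
/- Let Ψ ∈ C²(ℝ^d) be convex, bounded from below, with ΔΨ bounded, and suppose there is a constant C > 0 such that |x| |∇Ψ(x)| ≤ C(1 + |x|²) for all x ∈ ℝ^d. Let (ρ_t)_{t∈[0,1]} be a narrowly continuous family of Borel probability measures on ℝ^d with ∫ Ψ dρ_0 < ∞, and suppose there is a finite constant J such that for every p ∈ C_c^∞(ℝ^d) and every s ∈ [0,1]: ∫ p dρ_s − ∫ p dρ_0 − ∫_0^s ∫ Δp dρ_t dt + ∫_0^s ∫ ∇Ψ · ∇p dρ_t dt − (1/2) ∫_0^s ∫ |∇p|² dρ_t dt ≤ J. Then sup_{t∈[0,1]} ∫ |Ψ| dρ_t < ∞ and ∫_0^1 ∫_{ℝ^d} |∇Ψ(x)|² ρ_t(dx) dt < ∞. -/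
open MeasureTheory
open scoped RealInnerProductSpace

/-- The Laplacian of `f : ℝ^d → ℝ`, as the sum of the pure second derivatives. -/
noncomputable def lapl {d : ℕ} (f : EuclideanSpace ℝ (Fin d) → ℝ)
    (x : EuclideanSpace ℝ (Fin d)) : ℝ :=
  ∑ i : Fin d, fderiv ℝ (fun y => fderiv ℝ f y (EuclideanSpace.single i 1)) x
    (EuclideanSpace.single i 1)

section aux
variable {d : ℕ}

lemma inner_grad' (f : EuclideanSpace ℝ (Fin d) → ℝ) (x v : EuclideanSpace ℝ (Fin d)) :
    ⟪gradient f x, v⟫ = fderiv ℝ f x v := by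
  simp [gradient]

lemma grad_coord (f : EuclideanSpace ℝ (Fin d) → ℝ) (x : EuclideanSpace ℝ (Fin d)) (i : Fin d) :
    gradient f x i = fderiv ℝ f x (EuclideanSpace.single i 1) := by
  rw [← inner_grad', EuclideanSpace.inner_single_right]; simp

lemma inner_grad_sum (f h : EuclideanSpace ℝ (Fin d) → ℝ) (x : EuclideanSpace ℝ (Fin d)) :
    ⟪gradient f x, gradient h x⟫ = ∑ i, fderiv ℝ f x (EuclideanSpace.single i 1) *
      fderiv ℝ h x (EuclideanSpace.single i 1) := by
  rw [PiLp.inner_apply]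
  refine Finset.sum_congr rfl fun i _ => ?_
  rw [← grad_coord, ← grad_coord]
  simp [mul_comm]

lemma diffD {f : EuclideanSpace ℝ (Fin d) → ℝ} (hf : ContDiff ℝ 2 f)
    (v : EuclideanSpace ℝ (Fin d)) : Differentiable ℝ (fun y => fderiv ℝ f y v) := by
  have : ContDiff ℝ 1 (fderiv ℝ f) := hf.fderiv_right (by norm_num)
  exact (this.differentiable one_ne_zero).clm_apply (differentiable_const v)

lemma lapl_eq {f : EuclideanSpace ℝ (Fin d) → ℝ} (hf : ContDiff ℝ 2 f)
    (x : EuclideanSpace ℝ (Fin d)) : lapl f x = ∑ i : Fin d,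
      fderiv ℝ (fderiv ℝ f) x (EuclideanSpace.single i 1) (EuclideanSpace.single i 1) := by
  have : ContDiff ℝ 1 (fderiv ℝ f) := hf.fderiv_right (by norm_num)
  refine Finset.sum_congr rfl fun i _ => ?_
  rw [fderiv_clm_apply ((this.differentiable one_ne_zero) x) (differentiableAt_const _)]
  simp

lemma lapl_cont {f : EuclideanSpace ℝ (Fin d) → ℝ} (hf : ContDiff ℝ 2 f) :
    Continuous (lapl f) := by
  have h1 : ContDiff ℝ 1 (fderiv ℝ f) := hf.fderiv_right (by norm_num)
  have h2 : Continuous (fderiv ℝ (fderiv ℝ f)) := h1.continuous_fderiv one_ne_zero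
  have : lapl f = fun x => ∑ i : Fin d,
      fderiv ℝ (fderiv ℝ f) x (EuclideanSpace.single i 1) (EuclideanSpace.single i 1) :=
    funext (lapl_eq hf)
  rw [this]
  fun_prop

lemma grad_cont {f : EuclideanSpace ℝ (Fin d) → ℝ} (hf : ContDiff ℝ 2 f) :
    Continuous (gradient f) := by
  have h1 : Continuous (fderiv ℝ f) := hf.continuous_fderiv two_ne_zero
  exact (InnerProductSpace.toDual ℝ _).symm.continuous.comp h1

lemma grad_mul {f h : EuclideanSpace ℝ (Fin d) → ℝ} (hf : ContDiff ℝ 2 f) (hh : ContDiff ℝ 2 h)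
    (x : EuclideanSpace ℝ (Fin d)) :
    gradient (fun y => f y * h y) x = f x • gradient h x + h x • gradient f x := by
  unfold gradient
  rw [fderiv_fun_mul ((hf.differentiable two_ne_zero) x) ((hh.differentiable two_ne_zero) x)]
  simp

lemma grad_comp {f : EuclideanSpace ℝ (Fin d) → ℝ} (hf : ContDiff ℝ 2 f) {φ : ℝ → ℝ}
    {a : ℝ} (x : EuclideanSpace ℝ (Fin d)) (h1 : HasDerivAt φ a (f x)) :
    gradient (fun y => φ (f y)) x = a • gradient f x := by
  unfold gradient
  have := (h1.comp_hasFDerivAt x ((hf.differentiable two_ne_zero) x).hasFDerivAt).fderiv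
  rw [show (fun y => φ (f y)) = φ ∘ f from rfl, this]
  simp

lemma lapl_mul {f h : EuclideanSpace ℝ (Fin d) → ℝ} (hf : ContDiff ℝ 2 f) (hh : ContDiff ℝ 2 h)
    (x : EuclideanSpace ℝ (Fin d)) :
    lapl (fun y => f y * h y) x = f x * lapl h x + h x * lapl f x
      + 2 * ⟪gradient f x, gradient h x⟫ := by
  rw [inner_grad_sum]
  unfold lapl
  simp only [Finset.mul_sum, ← Finset.sum_add_distrib]
  refine Finset.sum_congr rfl fun i _ => ?_
  have hfd := hf.differentiable two_ne_zero
  have hhd := hh.differentiable two_ne_zero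
  have e : (fun y => fderiv ℝ (fun y => f y * h y) y (EuclideanSpace.single i 1)) =
      fun y => f y * fderiv ℝ h y (EuclideanSpace.single i 1)
        + h y * fderiv ℝ f y (EuclideanSpace.single i 1) := by
    funext y
    rw [fderiv_fun_mul (hfd y) (hhd y)]
    simp
  rw [e]
  have a1 := diffD hf (EuclideanSpace.single i (1:ℝ))
  have a2 := diffD hh (EuclideanSpace.single i (1:ℝ))
  rw [fderiv_fun_add ((hfd x).fun_mul (a2 x)) ((hhd x).fun_mul (a1 x)),
    fderiv_fun_mul (hfd x) (a2 x), fderiv_fun_mul (hhd x) (a1 x)]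
  simp only [add_apply, smul_apply, smul_eq_mul]
  ring

lemma lapl_comp {f : EuclideanSpace ℝ (Fin d) → ℝ} (hf : ContDiff ℝ 2 f) {φ φ' φ'' : ℝ → ℝ}
    (h1 : ∀ x, HasDerivAt φ (φ' (f x)) (f x)) (h2 : ∀ x, HasDerivAt φ' (φ'' (f x)) (f x))
    (x : EuclideanSpace ℝ (Fin d)) :
    lapl (fun y => φ (f y)) x = φ'' (f x) * ‖gradient f x‖ ^ 2 + φ' (f x) * lapl f x := by
  rw [← real_inner_self_eq_norm_sq, inner_grad_sum]
  unfold lapl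
  simp only [Finset.mul_sum, ← Finset.sum_add_distrib]
  refine Finset.sum_congr rfl fun i _ => ?_
  have hfd := hf.differentiable two_ne_zero
  have e : (fun y => fderiv ℝ (fun y => φ (f y)) y (EuclideanSpace.single i 1)) =
      fun y => φ' (f y) * fderiv ℝ f y (EuclideanSpace.single i 1) := by
    funext y
    have := ((h1 y).comp_hasFDerivAt y (hfd y).hasFDerivAt).fderiv
    rw [show (fun y => φ (f y)) = φ ∘ f from rfl, this]
    simp
  rw [e]
  have a1 := diffD hf (EuclideanSpace.single i (1:ℝ))
  have b := (h2 x).comp_hasFDerivAt x (hfd x).hasFDerivAt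
  have := (b.mul (a1 x).hasFDerivAt).fderiv
  simp only [Function.comp_def] at this
  erw [this]
  simp only [add_apply, smul_apply, smul_eq_mul]
  ring

lemma grad_normsq (x : EuclideanSpace ℝ (Fin d)) :
    gradient (fun y : EuclideanSpace ℝ (Fin d) => ‖y‖ ^ 2) x = (2:ℝ) • x := by
  have := (hasStrictFDerivAt_norm_sq x).hasFDerivAt.fderiv
  refine ext_inner_right ℝ fun v => ?_
  rw [inner_grad', this]
  simp [two_smul, inner_add_left]

lemma lapl_normsq (x : EuclideanSpace ℝ (Fin d)) :
    lapl (fun y : EuclideanSpace ℝ (Fin d) => ‖y‖ ^ 2) x = 2 * d := by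
  unfold lapl
  have : ∀ i : Fin d, (fun y => fderiv ℝ (fun y : EuclideanSpace ℝ (Fin d) => ‖y‖ ^ 2) y
      (EuclideanSpace.single i 1)) = fun y => ((2:ℝ) • EuclideanSpace.proj (𝕜 := ℝ) i : EuclideanSpace ℝ (Fin d) →L[ℝ] ℝ) y := by
    intro i; funext y
    rw [← grad_coord, grad_normsq]; simp
  simp only [this, ContinuousLinearMap.fderiv]
  simp [mul_comm]

open Convolution in
lemma fderiv_moll {F : Type*} [NormedAddCommGroup F] [NormedSpace ℝ F] [FiniteDimensional ℝ F]
    (φ : ContDiffBump (0 : EuclideanSpace ℝ (Fin d))) {f : EuclideanSpace ℝ (Fin d) → F}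
    (hf : ContDiff ℝ 1 f) (hc : HasCompactSupport f) :
    fderiv ℝ (φ.normed volume ⋆[ContinuousLinearMap.lsmul ℝ ℝ, volume] f) =
      (φ.normed volume ⋆[ContinuousLinearMap.lsmul ℝ ℝ, volume] (fderiv ℝ f)) := by
  funext x
  have := (hc.hasFDerivAt_convolution_right (ContinuousLinearMap.lsmul ℝ ℝ)
    (f := φ.normed volume) (μ := volume) φ.continuous_normed.locallyIntegrable hf x).fderiv
  rw [this]
  rfl

lemma two_le_inf : (2 : WithTop ℕ∞) ≤ ((⊤ : ℕ∞) : WithTop ℕ∞) := by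
  change ((2 : ℕ∞) : WithTop ℕ∞) ≤ _
  exact WithTop.coe_le_coe.2 le_top

open Convolution in
lemma moll_dist {F : Type*} [NormedAddCommGroup F] [NormedSpace ℝ F] [FiniteDimensional ℝ F]
    {f : EuclideanSpace ℝ (Fin d) → F}
    (hf : Continuous f) (hc : HasCompactSupport f) {δ : ℝ} (hδ : 0 < δ) :
    ∃ r > 0, ∀ φ : ContDiffBump (0 : EuclideanSpace ℝ (Fin d)), φ.rOut ≤ r → ∀ x,
      ‖(φ.normed volume ⋆[ContinuousLinearMap.lsmul ℝ ℝ, volume] f) x - f x‖ ≤ δ := by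
  have huc := hf.uniformContinuous_of_tendsto_cocompact hc.is_zero_at_infty
  rw [Metric.uniformContinuous_iff] at huc
  obtain ⟨r, hr, h⟩ := huc δ hδ
  refine ⟨r, hr, fun φ hφ x => ?_⟩
  rw [← dist_eq_norm]
  refine φ.dist_normed_convolution_le hf.aestronglyMeasurable fun y hy => (h ?_).le
  exact lt_of_lt_of_le hy hφ

lemma approx {p : EuclideanSpace ℝ (Fin d) → ℝ} (hp : ContDiff ℝ 2 p) (hc : HasCompactSupport p)
    {w : EuclideanSpace ℝ (Fin d) → ℝ} (hw : Continuous w)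
    {δ : ℝ} (hδ : 0 < δ) :
    ∃ q : EuclideanSpace ℝ (Fin d) → ℝ, ContDiff ℝ (⊤ : ℕ∞) q ∧ HasCompactSupport q ∧
      (∀ x, |q x - p x| ≤ δ) ∧ (∀ x, w x * ‖gradient q x - gradient p x‖ ≤ δ) ∧
      (∀ x, |lapl q x - lapl p x| ≤ δ) := by
  have hp1 : ContDiff ℝ 1 (fderiv ℝ p) := hp.fderiv_right (by norm_num)
  have hc1 : HasCompactSupport (fderiv ℝ p) := hc.fderiv ℝ
  have hc2 : HasCompactSupport (fderiv ℝ (fderiv ℝ p)) := hc1.fderiv ℝ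
  obtain ⟨R, hR⟩ := hc1.isCompact.isBounded.subset_closedBall (0 : EuclideanSpace ℝ (Fin d))
  obtain ⟨M, hM⟩ := (isCompact_closedBall (0 : EuclideanSpace ℝ (Fin d)) (R+1)).exists_bound_of_continuousOn
    hw.continuousOn
  have hM' : ∀ x, ‖x‖ ≤ R + 1 → w x ≤ max M 1 := fun x hx =>
    (le_abs_self _).trans ((hM x (by simpa using hx)).trans (le_max_left _ _))
  have hMp : 0 < max M 1 := lt_of_lt_of_le one_pos (le_max_right _ _)
  obtain ⟨r0, hr0, h0⟩ := moll_dist hp.continuous hc hδ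
  obtain ⟨r1, hr1, h1⟩ := moll_dist hp1.continuous hc1 (div_pos hδ hMp)
  obtain ⟨r2, hr2, h2⟩ := moll_dist (hp1.continuous_fderiv one_ne_zero) hc2
    (δ := δ / (d + 1)) (by positivity)
  set r := min (min r0 r1) (min r2 1)
  have hr : 0 < r := by simp [r, *]
  let φ : ContDiffBump (0 : EuclideanSpace ℝ (Fin d)) := ⟨r/2, r, by positivity, by linarith⟩
  have hφ : φ.rOut = r := rfl
  have e1 := fderiv_moll φ (hp.of_le (by norm_num)) hc
  have e2 := fderiv_moll φ hp1 hc1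
  have hsm : ContDiff ℝ (⊤ : ℕ∞) (convolution (φ.normed volume) p (ContinuousLinearMap.lsmul ℝ ℝ) volume) :=
    φ.hasCompactSupport_normed.contDiff_convolution_left _ φ.contDiff_normed
      hp.continuous.locallyIntegrable
  refine ⟨_, hsm, φ.hasCompactSupport_normed.convolution _ hc, ?_, ?_, ?_⟩
  · intro x
    exact h0 φ (by simp [hφ, r]) x
  · intro x
    have hn : ‖gradient (convolution (φ.normed volume) p (ContinuousLinearMap.lsmul ℝ ℝ) volume) x - gradient p x‖
      = ‖convolution (φ.normed volume) (fderiv ℝ p) (ContinuousLinearMap.lsmul ℝ ℝ) volume x - fderiv ℝ p x‖ := by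
      unfold gradient
      rw [← map_sub, LinearIsometryEquiv.norm_map, e1]
    rw [hn]
    by_cases hx : ‖x‖ ≤ R + 1
    · calc _ ≤ max M 1 * (δ / max M 1) :=
            mul_le_mul (hM' x hx) (h1 φ (by simp [hφ, r]) x) (norm_nonneg _) hMp.le
        _ = δ := by field_simp
    · have hz : ∀ y, R < ‖y‖ → fderiv ℝ p y = 0 := by
        intro y hy
        by_contra hne
        have := hR (subset_tsupport _ hne)
        simp at this; linarith
      push Not at hx
      rw [φ.normed_convolution_eq_right, sub_self]
      · simp [hδ.le]
      · intro y hy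
        have hy' : ‖y - x‖ < r := by simpa [hφ, dist_eq_norm] using hy
        have : r ≤ 1 := by simp [r]
        have h3 : ‖x‖ ≤ ‖y‖ + ‖y - x‖ := by
          have := norm_sub_le y (y - x); simpa using this
        rw [hz y (by linarith), hz x (by linarith)]
  · intro x
    rw [lapl_eq (hsm.of_le two_le_inf), lapl_eq hp, e1, e2, ← Finset.sum_sub_distrib]
    calc _ ≤ ∑ i : Fin d, δ / (d+1) := by
          refine (Finset.abs_sum_le_sum_abs _ _).trans (Finset.sum_le_sum fun i _ => ?_)
          rw [← sub_apply, ← sub_apply, ← Real.norm_eq_abs]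
          refine (ContinuousLinearMap.le_opNorm₂ _ _ _).trans ?_
          simpa using h2 φ (by simp [hφ, r]) x
      _ ≤ δ := by
          simp only [Finset.sum_const, Finset.card_univ, Fintype.card_fin, nsmul_eq_mul]
          rw [mul_div_assoc', div_le_iff₀ (by positivity)]
          nlinarith

lemma cutoff (d : ℕ) : ∃ A : ℝ, 0 ≤ A ∧ ∀ ε : ℝ, 0 < ε → ε ≤ 1 →
    ∃ χ : EuclideanSpace ℝ (Fin d) → ℝ, ContDiff ℝ 2 χ ∧ HasCompactSupport χ ∧
      (∀ x, 0 ≤ χ x) ∧ (∀ x, χ x ≤ 1) ∧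
      (∀ x, ‖gradient χ x‖ * (1 + ‖x‖ ^ 2) ≤ A * ε * ‖x‖) ∧
      (∀ x, |lapl χ x| ≤ A * ε) ∧
      (∀ x, ε * Real.log (1 + ‖x‖ ^ 2) ≤ 1 → χ x = 1) := by
  let b : ContDiffBump (0 : ℝ) := ⟨1, 2, by norm_num, by norm_num⟩
  have hb : ContDiff ℝ (⊤ : ℕ∞) b := b.contDiff
  have hb1 : ContDiff ℝ (⊤ : ℕ∞) (deriv b) := by
    simpa using hb.iterate_deriv 1
  have hb2 : ContDiff ℝ (⊤ : ℕ∞) (deriv (deriv b)) := by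
    simpa using hb.iterate_deriv 2
  have hcs : HasCompactSupport b := b.hasCompactSupport
  obtain ⟨B1, hB1⟩ := hb1.continuous.bounded_above_of_compact_support hcs.deriv
  obtain ⟨B2, hB2⟩ := hb2.continuous.bounded_above_of_compact_support hcs.deriv.deriv
  set B := max B1 B2
  have hB1' : ∀ r, |deriv b r| ≤ B := fun r => (hB1 r).trans (le_max_left _ _)
  have hB2' : ∀ r, |deriv (deriv b) r| ≤ B := fun r => (hB2 r).trans (le_max_right _ _)
  have hB0 : 0 ≤ B := (abs_nonneg _).trans (hB1' 0)
  refine ⟨(8 + 2 * d) * B, by positivity, fun ε hε hε1 => ?_⟩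
  let N : EuclideanSpace ℝ (Fin d) → ℝ := fun x => ‖x‖ ^ 2
  have hN : ContDiff ℝ 2 N := contDiff_norm_sq ℝ
  have hN0 : ∀ x, 0 ≤ N x := fun x => by positivity
  let θ : ℝ → ℝ := fun r => b (ε * Real.log (1 + r))
  let θ' : ℝ → ℝ := fun r => deriv b (ε * Real.log (1 + r)) * (ε / (1 + r))
  let θ'' : ℝ → ℝ := fun r => deriv (deriv b) (ε * Real.log (1 + r)) * (ε / (1 + r)) * (ε / (1 + r))
    + deriv b (ε * Real.log (1 + r)) * (- ε / (1 + r) ^ 2)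
  have hL : ∀ x, HasDerivAt (fun r => ε * Real.log (1 + r)) (ε / (1 + N x)) (N x) := by
    intro x
    have h := (((hasDerivAt_id (N x)).const_add 1).log (by have := hN0 x; simp; positivity)).const_mul ε
    exact h.congr_deriv (by simp only [id]; ring)
  have h1 : ∀ x, HasDerivAt θ (θ' (N x)) (N x) := by
    intro x
    have := ((hb.differentiable (by simp)) (ε * Real.log (1 + N x))).hasDerivAt
    exact HasDerivAt.comp (h₂ := fun y => b y) (h := fun r => ε * Real.log (1 + r)) (N x) this (hL x)
  have h2 : ∀ x, HasDerivAt θ' (θ'' (N x)) (N x) := by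
    intro x
    have := ((hb1.differentiable (by simp)) (ε * Real.log (1 + N x))).hasDerivAt
    have h3 := this.comp (N x) (hL x)
    have h4 : HasDerivAt (fun r => ε / (1 + r)) (- ε / (1 + N x) ^ 2) (N x) := by
      have hx := hN0 x
      have := (hasDerivAt_const (N x) ε).div ((hasDerivAt_id (N x)).const_add 1) (by simp; positivity)
      exact this.congr_deriv (by simp)
    exact h3.mul h4
  have hχ : ContDiff ℝ 2 (fun x => θ (N x)) := by
    have : ContDiff ℝ 2 (fun x => ε * Real.log (1 + N x)) := by
      refine contDiff_const.mul ((contDiff_const.add hN).log fun x => ?_)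
      have := hN0 x; positivity
    exact (hb.of_le two_le_inf).comp this
  have hθ' : ∀ x, |θ' (N x)| ≤ B * (ε / (1 + N x)) := by
    intro x
    have hx := hN0 x
    simp only [θ', abs_mul]
    rw [abs_of_nonneg (by positivity : 0 ≤ ε / (1 + N x))]
    gcongr
    exact hB1' _
  have hθ'' : ∀ x, |θ'' (N x)| ≤ 2 * B * (ε / (1 + N x) ^ 2) := by
    intro x
    have hx := hN0 x
    simp only [θ'']
    refine (abs_add_le _ _).trans ?_
    rw [mul_assoc, abs_mul, abs_mul (deriv b _)]
    have e1 : |ε / (1 + N x) * (ε / (1 + N x))| ≤ ε / (1 + N x) ^ 2 := by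
      rw [abs_of_nonneg (by positivity), div_mul_div_comm, ← sq (1 + N x)]
      gcongr
      nlinarith
    have e2 : |- ε / (1 + N x) ^ 2| = ε / (1 + N x) ^ 2 := by
      rw [abs_div, abs_neg, abs_of_pos hε, abs_of_pos (by positivity)]
    rw [e2]
    have h0 : 0 ≤ ε / (1 + N x) ^ 2 := by positivity
    have := mul_le_mul (hB2' (ε * Real.log (1 + N x))) e1 (abs_nonneg _) hB0
    have := mul_le_mul_of_nonneg_right (hB1' (ε * Real.log (1 + N x))) h0
    linarith
  refine ⟨fun x => θ (N x), hχ, ?_, fun x => b.nonneg, fun x => b.le_one, ?_, ?_, ?_⟩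
  · refine HasCompactSupport.intro (isCompact_closedBall 0 (Real.exp (2 / ε))) fun x hx => ?_
    apply b.zero_of_le_dist
    have hx' : Real.exp (2 / ε) < ‖x‖ := by simpa using hx
    have h1 : 1 < Real.exp (2 / ε) := by rw [Real.one_lt_exp_iff]; positivity
    have : 2 / ε ≤ Real.log (1 + N x) := by
      rw [Real.le_log_iff_exp_le (by positivity)]
      have : N x = ‖x‖ ^ 2 := rfl
      nlinarith
    have : 2 ≤ ε * Real.log (1 + N x) := by
      rw [div_le_iff₀ hε] at this; linarith
    rw [Real.dist_eq, sub_zero]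
    exact this.trans (le_abs_self _)
  · intro x
    rw [grad_comp hN x (h1 x)]
    have : gradient N x = (2:ℝ) • x := grad_normsq x
    rw [this, norm_smul, norm_smul, Real.norm_eq_abs]
    have h := hθ' x
    have hx := hN0 x
    change _ * (1 + N x) ≤ _
    calc _ ≤ B * (ε / (1 + N x)) * (‖(2:ℝ)‖ * ‖x‖) * (1 + N x) := by gcongr
      _ = 2 * B * ε * ‖x‖ := by simp; field_simp
      _ ≤ _ := by
        have : 0 ≤ B * ε * ‖x‖ := by positivity
        have : 0 ≤ d * (B * ε * ‖x‖) := by positivity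
        nlinarith
  · intro x
    rw [lapl_comp hN h1 h2]
    have e1 : gradient N x = (2:ℝ) • x := grad_normsq x
    have e2 : lapl N x = 2 * d := lapl_normsq x
    have e3 : ‖gradient N x‖ ^ 2 = 4 * N x := by
      rw [e1, norm_smul, mul_pow]; norm_num [N]
    rw [e2, e3]
    have hx := hN0 x
    refine (abs_add_le _ _).trans ?_
    rw [abs_mul, abs_mul (θ' _), abs_of_nonneg (by positivity : 0 ≤ 4 * N x),
      abs_of_nonneg (by positivity : (0:ℝ) ≤ 2 * d)]
    have f1 : ε / (1 + N x) ^ 2 * N x ≤ ε := by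
      rw [div_mul_eq_mul_div, div_le_iff₀ (by positivity)]
      nlinarith [mul_nonneg hε.le hx, mul_nonneg hε.le (sq_nonneg (N x))]
    have f2 : ε / (1 + N x) ≤ ε := by
      rw [div_le_iff₀ (by positivity)]; nlinarith
    calc _ ≤ 2 * B * (ε / (1 + N x) ^ 2) * (4 * N x) + B * (ε / (1 + N x)) * (2 * d) := by
          gcongr
          · exact hθ'' x
          · exact hθ' x
      _ = 8 * B * (ε / (1 + N x) ^ 2 * N x) + B * (ε / (1 + N x)) * (2 * d) := by ring
      _ ≤ 8 * B * ε + B * ε * (2 * d) := by gcongr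
      _ = _ := by ring
  · intro x hx
    apply b.one_of_mem_closedBall
    have : 0 ≤ Real.log (1 + N x) := Real.log_nonneg (by have := hN0 x; linarith)
    simp only [Metric.mem_closedBall, Real.dist_eq, sub_zero]
    rw [abs_of_nonneg (by positivity)]
    exact hx

set_option maxHeartbeats 2000000 in
lemma tests {U : EuclideanSpace ℝ (Fin d) → ℝ} (hU : ContDiff ℝ 2 U) (hU0 : ∀ x, 0 ≤ U x)
    {Cl : ℝ} (hlap : ∀ x, |lapl U x| ≤ Cl) {C : ℝ} (hC : 0 < C)
    (hgrowth : ∀ x, ‖x‖ * ‖gradient U x‖ ≤ C * (1 + ‖x‖ ^ 2)) :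
    ∃ K : ℝ, 0 ≤ K ∧ ∃ q h : ℕ → EuclideanSpace ℝ (Fin d) → ℝ,
      (∀ n, ContDiff ℝ (⊤ : ℕ∞) (q n)) ∧ (∀ n, HasCompactSupport (q n)) ∧
      (∀ n, Continuous (h n)) ∧ (∀ n, HasCompactSupport (h n)) ∧ (∀ n x, 0 ≤ h n x) ∧
      (∀ n x, -1 ≤ q n x) ∧ (∀ n x, q n x ≤ U x + 1) ∧
      (∀ x, Filter.Tendsto (fun n => q n x) Filter.atTop (nhds (U x))) ∧
      (∀ x, Filter.Tendsto (fun n => h n x) Filter.atTop (nhds (‖gradient U x‖ ^ 2))) ∧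
      (∀ n x, 1 / 2 * h n x - K ≤ - lapl (q n) x + ⟪gradient U x, gradient (q n) x⟫
        - 1 / 2 * ‖gradient (q n) x‖ ^ 2) := by
  obtain ⟨A, hA, hcut⟩ := cutoff d
  have hCl : 0 ≤ Cl := (abs_nonneg _).trans (hlap 0)
  have hm0 : ∀ n : ℕ, (0:ℝ) < n + 1 := fun n => by positivity
  choose χ χC χcs χ0 χ1 χg χl χe using fun n : ℕ => hcut (1 / ((n:ℝ) + 1))
    (by positivity) (by rw [div_le_one (hm0 n)]; simp)
  let g : ℕ → ℝ → ℝ := fun n u => ((n:ℝ) + 1) - ((n:ℝ) + 1) ^ 2 / ((n:ℝ) + 1 + u)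
  let g' : ℕ → ℝ → ℝ := fun n u => ((n:ℝ) + 1) ^ 2 / ((n:ℝ) + 1 + u) ^ 2
  let g'' : ℕ → ℝ → ℝ := fun n u => - (2 * ((n:ℝ) + 1) ^ 2 / ((n:ℝ) + 1 + u) ^ 3)
  have hpos : ∀ (n : ℕ) x, 0 < (n:ℝ) + 1 + U x := fun n x => by
    have := hU0 x; positivity
  have hd1 : ∀ n x, HasDerivAt (g n) (g' n (U x)) (U x) := by
    intro n x
    have h := ((hasDerivAt_const (U x) (((n:ℝ) + 1) ^ 2)).div
      ((hasDerivAt_id (U x)).const_add ((n:ℝ) + 1)) (hpos n x).ne').const_sub ((n:ℝ) + 1)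
    exact h.congr_deriv (by simp [g', neg_div])
  have hd2 : ∀ n x, HasDerivAt (g' n) (g'' n (U x)) (U x) := by
    intro n x
    have h := ((hasDerivAt_const (U x) (((n:ℝ) + 1) ^ 2)).div
      (((hasDerivAt_id (U x)).const_add ((n:ℝ) + 1)).pow 2) (pow_ne_zero 2 (hpos n x).ne'))
    refine h.congr_deriv ?_
    have := (hpos n x).ne'
    simp [g'']
    field_simp
  have hgC : ∀ n, ContDiff ℝ 2 (fun x => g n (U x)) := fun n =>
    contDiff_const.sub (contDiff_const.div (contDiff_const.add hU) fun x => (hpos n x).ne')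
  have hgeq : ∀ n x, g n (U x) = ((n:ℝ) + 1) * U x / ((n:ℝ) + 1 + U x) := by
    intro n x
    have := (hpos n x).ne'
    simp only [g]; field_simp; ring
  have hg0 : ∀ n x, 0 ≤ g n (U x) := fun n x => by
    rw [hgeq]; have := hU0 x; positivity
  have hgn : ∀ n x, g n (U x) ≤ (n:ℝ) + 1 := fun n x => by
    have := hpos n x
    simp only [g]
    have : 0 ≤ ((n:ℝ) + 1) ^ 2 / ((n:ℝ) + 1 + U x) := by positivity
    linarith
  have hgU : ∀ n x, g n (U x) ≤ U x := fun n x => by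
    have := hU0 x
    rw [hgeq, div_le_iff₀ (hpos n x)]; nlinarith
  have hg'0 : ∀ n x, 0 ≤ g' n (U x) := fun n x => by
    simp only [g']; positivity
  have hg'1 : ∀ n x, g' n (U x) ≤ 1 := fun n x => by
    have := hpos n x
    simp only [g']
    rw [div_le_one (by positivity)]
    have := hU0 x
    exact pow_le_pow_left₀ (hm0 n).le (by linarith) 2
  have hg''0 : ∀ n x, g'' n (U x) ≤ 0 := fun n x => by
    have := hpos n x
    simp only [g'', Left.neg_nonpos_iff]; positivity
  let p : ℕ → EuclideanSpace ℝ (Fin d) → ℝ := fun n x => χ n x * g n (U x)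
  have hpC : ∀ n, ContDiff ℝ 2 (p n) := fun n => (χC n).mul (hgC n)
  have hpcs : ∀ n, HasCompactSupport (p n) := fun n => (χcs n).mul_right
  choose q qC qcs qp qg ql using fun n : ℕ => approx (hpC n) (hpcs n)
    (w := fun x => 1 + ‖gradient U x‖ + ‖gradient (p n) x‖)
    ((continuous_const.add (grad_cont hU).norm).add (grad_cont (hpC n)).norm)
    (δ := 1 / ((n:ℝ) + 1)) (by positivity)
  have hδ1 : ∀ n : ℕ, 1 / ((n:ℝ) + 1) ≤ 1 := fun n => by
    rw [div_le_one (hm0 n)]; simp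
  have hp0 : ∀ n x, 0 ≤ p n x := fun n x => mul_nonneg (χ0 n x) (hg0 n x)
  have hpU : ∀ n x, p n x ≤ U x := fun n x => by
    have := mul_le_mul (χ1 n x) (hgU n x) (hg0 n x) zero_le_one
    simpa [p] using this
  have hδt : Filter.Tendsto (fun n : ℕ => 1 / ((n:ℝ) + 1)) Filter.atTop (nhds 0) :=
    tendsto_one_div_add_atTop_nhds_zero_nat
  have hχt : ∀ x, Filter.Tendsto (fun n => χ n x) Filter.atTop (nhds 1) := by
    intro x
    have h1 : Filter.Tendsto (fun n : ℕ => 1 / ((n:ℝ) + 1) * Real.log (1 + ‖x‖ ^ 2))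
        Filter.atTop (nhds 0) := by simpa using hδt.mul_const (Real.log (1 + ‖x‖ ^ 2))
    refine tendsto_const_nhds.congr' ?_
    filter_upwards [h1.eventually_le_const (zero_lt_one)] with n hn
    exact (χe n x hn).symm
  have hrt : ∀ x, Filter.Tendsto (fun n : ℕ => ((n:ℝ) + 1) / ((n:ℝ) + 1 + U x))
      Filter.atTop (nhds 1) := by
    intro x
    have h1 : Filter.Tendsto (fun n : ℕ => (1 + 1 / ((n:ℝ) + 1) * U x)⁻¹)
        Filter.atTop (nhds ((1 + 0 * U x)⁻¹)) :=
      ((hδt.mul_const (U x)).const_add 1).inv₀ (by simp)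
    simp only [zero_mul, add_zero, inv_one] at h1
    refine h1.congr fun n => ?_
    have := (hm0 n).ne'
    have := (hpos n x).ne'
    field_simp
  have hgt : ∀ x, Filter.Tendsto (fun n => g n (U x)) Filter.atTop (nhds (U x)) := by
    intro x
    have h := (hrt x).mul_const (U x)
    rw [one_mul] at h
    refine h.congr fun n => ?_
    rw [hgeq]; ring
  have hg't : ∀ x, Filter.Tendsto (fun n => g' n (U x)) Filter.atTop (nhds 1) := by
    intro x
    have h := (hrt x).pow 2
    rw [one_pow] at h
    refine h.congr fun n => ?_
    simp only [g', div_pow]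
  refine ⟨Cl + (A + 4 * A * C + A ^ 2) + 4, by positivity, q,
    fun n x => χ n x * (g' n (U x) * ‖gradient U x‖ ^ 2), qC, qcs, ?_, ?_, ?_, ?_, ?_, ?_, ?_, ?_⟩
  · intro n
    refine (χC n).continuous.mul (Continuous.mul ?_ ((grad_cont hU).norm.pow 2))
    exact continuous_const.div ((continuous_const.add hU.continuous).pow 2)
      fun x => (pow_pos (hpos n x) 2).ne'
  · intro n
    exact (χcs n).mul_right
  · intro n x
    exact mul_nonneg (χ0 n x) (mul_nonneg (hg'0 n x) (by positivity))
  · intro n x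
    have := (abs_le.1 (qp n x)).1
    linarith [hp0 n x, hδ1 n]
  · intro n x
    have := (abs_le.1 (qp n x)).2
    linarith [hpU n x, hδ1 n]
  · intro x
    have h1 : Filter.Tendsto (fun n => p n x) Filter.atTop (nhds (U x)) := by
      simpa using (hχt x).mul (hgt x)
    have h2 : Filter.Tendsto (fun n => q n x - p n x) Filter.atTop (nhds 0) :=
      squeeze_zero_norm (fun n => qp n x) hδt
    simpa using h2.add h1
  · intro x
    simpa using (hχt x).mul ((hg't x).mul_const (‖gradient U x‖ ^ 2))
  · intro n x
    have hm := hm0 n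
    set m : ℝ := (n:ℝ) + 1
    have hm1 : 1 ≤ m := by simp [m]
    -- bounds on the cutoff
    have hN : 0 < 1 + ‖x‖ ^ 2 := by positivity
    have c1 : ‖gradient (χ n) x‖ * ‖gradient U x‖ ≤ A * C / m := by
      have h1 := mul_le_mul_of_nonneg_right (χg n x) (norm_nonneg (gradient U x))
      have h2 := mul_le_mul_of_nonneg_left (hgrowth x) (by positivity : 0 ≤ A * (1 / m))
      refine le_of_mul_le_mul_right ?_ hN
      calc _ = ‖gradient (χ n) x‖ * (1 + ‖x‖ ^ 2) * ‖gradient U x‖ := by ring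
        _ ≤ A * (1 / m) * ‖x‖ * ‖gradient U x‖ := h1
        _ ≤ A * (1 / m) * (C * (1 + ‖x‖ ^ 2)) := by linarith
        _ = _ := by ring
    have c2 : ‖gradient (χ n) x‖ ≤ A / m := by
      refine le_of_mul_le_mul_right ((χg n x).trans ?_) hN
      have : ‖x‖ ≤ 1 + ‖x‖ ^ 2 := by nlinarith [sq_nonneg (‖x‖ - 1)]
      calc _ ≤ A * (1 / m) * (1 + ‖x‖ ^ 2) := by gcongr
        _ = _ := by ring
    have c3 : |lapl (χ n) x| ≤ A / m := by
      refine (χl n x).trans (le_of_eq ?_); ring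
    -- formulas
    have f1 : lapl (p n) x = χ n x * (g'' n (U x) * ‖gradient U x‖ ^ 2 + g' n (U x) * lapl U x)
        + g n (U x) * lapl (χ n) x + 2 * (g' n (U x) * ⟪gradient (χ n) x, gradient U x⟫) := by
      have := lapl_mul (χC n) (hgC n) x
      rw [lapl_comp hU (hd1 n) (hd2 n), grad_comp hU x (hd1 n x), inner_smul_right] at this
      exact this
    have f2 : gradient (p n) x = (χ n x * g' n (U x)) • gradient U x
        + g n (U x) • gradient (χ n) x := by
      have := grad_mul (χC n) (hgC n) x
      rw [grad_comp hU x (hd1 n x), smul_smul] at this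
      exact this
    have f3 : ⟪gradient U x, gradient (p n) x⟫ = χ n x * g' n (U x) * ‖gradient U x‖ ^ 2
        + g n (U x) * ⟪gradient (χ n) x, gradient U x⟫ := by
      rw [f2, inner_add_right, inner_smul_right, inner_smul_right, real_inner_self_eq_norm_sq,
        real_inner_comm (gradient U x)]
    have f4 : ‖gradient (p n) x‖ ^ 2 = (χ n x * g' n (U x)) ^ 2 * ‖gradient U x‖ ^ 2
        + 2 * (χ n x * g' n (U x) * g n (U x) * ⟪gradient (χ n) x, gradient U x⟫)
        + g n (U x) ^ 2 * ‖gradient (χ n) x‖ ^ 2 := by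
      rw [f2, norm_add_sq_real, inner_smul_left, inner_smul_right, norm_smul, norm_smul,
        mul_pow, mul_pow, Real.norm_eq_abs, Real.norm_eq_abs, sq_abs, sq_abs,
        real_inner_comm (gradient U x)]
      simp
      ring
    have hb : |⟪gradient (χ n) x, gradient U x⟫| ≤ A * C / m :=
      (abs_real_inner_le_norm _ _).trans c1
    -- comparison of q and p
    have k1 := abs_le.1 (ql n x)
    have k2 := qg n x
    have k3 : ‖gradient (q n) x - gradient (p n) x‖ ≤ 1 := by
      have : ‖gradient (q n) x - gradient (p n) x‖ ≤
        (1 + ‖gradient U x‖ + ‖gradient (p n) x‖) * ‖gradient (q n) x - gradient (p n) x‖ := by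
        refine le_mul_of_one_le_left (norm_nonneg _) ?_
        linarith [norm_nonneg (gradient U x), norm_nonneg (gradient (p n) x)]
      linarith [hδ1 n]
    have k4 : ‖gradient U x‖ * ‖gradient (q n) x - gradient (p n) x‖
        + ‖gradient (p n) x‖ * ‖gradient (q n) x - gradient (p n) x‖ ≤ 1 := by
      have := norm_nonneg (gradient (q n) x - gradient (p n) x)
      linarith [hδ1 n]
    have k5 : ⟪gradient U x, gradient (p n) x⟫
        - ‖gradient U x‖ * ‖gradient (q n) x - gradient (p n) x‖ ≤ ⟪gradient U x, gradient (q n) x⟫ := by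
      have := (abs_le.1 (abs_real_inner_le_norm (gradient U x) (gradient (q n) x - gradient (p n) x))).1
      rw [inner_sub_right] at this
      linarith
    have k6 : ‖gradient (q n) x‖ ^ 2 ≤ ‖gradient (p n) x‖ ^ 2
        + 2 * (‖gradient (p n) x‖ * ‖gradient (q n) x - gradient (p n) x‖) + 1 := by
      have h1 : ‖gradient (q n) x‖ ≤ ‖gradient (p n) x‖ + ‖gradient (q n) x - gradient (p n) x‖ := by
        have := norm_add_le (gradient (p n) x) (gradient (q n) x - gradient (p n) x)
        simpa using this
      have h2 := pow_le_pow_left₀ (norm_nonneg _) h1 2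
      nlinarith [norm_nonneg (gradient (q n) x - gradient (p n) x)]
    have k7 : 1 / 2 * (χ n x * (g' n (U x) * ‖gradient U x‖ ^ 2)) - (Cl + (A + 4 * A * C + A ^ 2))
        ≤ - lapl (p n) x + ⟪gradient U x, gradient (p n) x⟫ - 1 / 2 * ‖gradient (p n) x‖ ^ 2 := by
      rw [f1, f3, f4]
      have s1 : χ n x * (g' n (U x) * lapl U x) ≤ Cl := by
        have h1 : |χ n x * (g' n (U x) * lapl U x)| ≤ 1 * (1 * Cl) := by
          rw [abs_mul, abs_mul, abs_of_nonneg (χ0 n x), abs_of_nonneg (hg'0 n x)]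
          have := χ0 n x
          have := hg'0 n x
          gcongr
          exacts [χ1 n x, hg'1 n x, hlap x]
        linarith [(abs_le.1 h1).2]
      have s2 : χ n x * (g'' n (U x) * ‖gradient U x‖ ^ 2) ≤ 0 :=
        mul_nonpos_of_nonneg_of_nonpos (χ0 n x)
          (mul_nonpos_of_nonpos_of_nonneg (hg''0 n x) (by positivity))
      have s3 : g n (U x) * lapl (χ n) x ≤ A := by
        have h1 : |g n (U x) * lapl (χ n) x| ≤ m * (A / m) := by
          rw [abs_mul, abs_of_nonneg (hg0 n x)]
          exact mul_le_mul (hgn n x) c3 (abs_nonneg _) hm.le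
        rw [mul_div_cancel₀ _ hm.ne'] at h1
        exact (abs_le.1 h1).2
      have t : ∀ a, 0 ≤ a → a ≤ m → |a * ⟪gradient (χ n) x, gradient U x⟫| ≤ A * C := by
        intro a ha ham
        have h1 : |a * ⟪gradient (χ n) x, gradient U x⟫| ≤ m * (A * C / m) := by
          rw [abs_mul, abs_of_nonneg ha]
          exact mul_le_mul ham hb (abs_nonneg _) hm.le
        rwa [mul_div_cancel₀ _ hm.ne'] at h1
      have hχg : χ n x * g' n (U x) ≤ 1 := mul_le_one₀ (χ1 n x) (hg'0 n x) (hg'1 n x)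
      have hχg0 : 0 ≤ χ n x * g' n (U x) := mul_nonneg (χ0 n x) (hg'0 n x)
      have s4 := abs_le.1 (t _ (hg'0 n x) ((hg'1 n x).trans hm1))
      have s5 := abs_le.1 (t _ (hg0 n x) (hgn n x))
      have s6 := abs_le.1 (t _ (mul_nonneg hχg0 (hg0 n x))
        ((mul_le_of_le_one_left (hg0 n x) hχg).trans (hgn n x)))
      have s7 : g n (U x) ^ 2 * ‖gradient (χ n) x‖ ^ 2 ≤ A ^ 2 := by
        rw [← mul_pow]
        have h1 : g n (U x) * ‖gradient (χ n) x‖ ≤ m * (A / m) :=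
          mul_le_mul (hgn n x) c2 (norm_nonneg _) hm.le
        rw [mul_div_cancel₀ _ hm.ne'] at h1
        exact pow_le_pow_left₀ (mul_nonneg (hg0 n x) (norm_nonneg _)) h1 2
      have s8 : (χ n x * g' n (U x)) ^ 2 * ‖gradient U x‖ ^ 2
          ≤ χ n x * g' n (U x) * ‖gradient U x‖ ^ 2 := by
        refine mul_le_mul_of_nonneg_right ?_ (by positivity)
        rw [sq]; exact mul_le_of_le_one_left hχg0 hχg
      linarith [sq_nonneg A]
    have k8 := hδ1 n
    have k9 := norm_nonneg (gradient (q n) x - gradient (p n) x)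
    have := mul_nonneg (norm_nonneg (gradient U x)) k9
    have := mul_nonneg (norm_nonneg (gradient (p n) x)) k9
    linarith [k1.2]

lemma contF {ρ : ℝ → Measure (EuclideanSpace ℝ (Fin d))}
    (hnarrow : ∀ φ : BoundedContinuousFunction (EuclideanSpace ℝ (Fin d)) ℝ,
      ContinuousOn (fun t => ∫ x, φ x ∂(ρ t)) (Set.Icc (0 : ℝ) 1))
    {f : EuclideanSpace ℝ (Fin d) → ℝ} (hf : Continuous f) (hc : HasCompactSupport f) :
    ContinuousOn (fun t => ∫ x, f x ∂(ρ t)) (Set.Icc (0 : ℝ) 1) := by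
  obtain ⟨M, hM⟩ := hf.bounded_above_of_compact_support hc
  exact hnarrow (BoundedContinuousFunction.ofNormedAddCommGroup f hf M hM)

end aux

/-- Let `Ψ ∈ C²(ℝ^d)` be convex, bounded below, with bounded Laplacian
and subquadratic growth `|x||∇Ψ(x)| ≤ C(1+|x|²)`.  Let `(ρ_t)` be a narrowly
continuous family of probability measures with `∫Ψ dρ_0 < ∞` satisfying, for a finite
constant `J`, the weak rate-functional bound tested against all `p ∈ C_c^∞` and
`s ∈ [0,1]`.  Then `sup_{t∈[0,1]} ∫|Ψ| dρ_t < ∞` and `∫_0^1 ∫ |∇Ψ|² dρ_t dt < ∞`. -/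
theorem sup_absPsi_and_gradPsi_sq_finite (d : ℕ) (Ψ : EuclideanSpace ℝ (Fin d) → ℝ)
    (hΨ : ContDiff ℝ 2 Ψ)
    (hconv : ConvexOn ℝ Set.univ Ψ)
    (hbelow : ∃ c : ℝ, ∀ x, c ≤ Ψ x)
    (hlap : ∃ Cl : ℝ, ∀ x, |lapl Ψ x| ≤ Cl)
    (C : ℝ) (hC : 0 < C) (hgrowth : ∀ x, ‖x‖ * ‖gradient Ψ x‖ ≤ C * (1 + ‖x‖ ^ 2))
    (ρ : ℝ → Measure (EuclideanSpace ℝ (Fin d)))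
    (hprob : ∀ t ∈ Set.Icc (0 : ℝ) 1, IsProbabilityMeasure (ρ t))
    (hnarrow : ∀ φ : BoundedContinuousFunction (EuclideanSpace ℝ (Fin d)) ℝ,
      ContinuousOn (fun t => ∫ x, φ x ∂(ρ t)) (Set.Icc (0 : ℝ) 1))
    (hΨint : Integrable Ψ (ρ 0))
    (J : ℝ)
    (hJ : ∀ p : EuclideanSpace ℝ (Fin d) → ℝ, ContDiff ℝ (⊤ : ℕ∞) p → HasCompactSupport p →
      ∀ s ∈ Set.Icc (0 : ℝ) 1,
        (∫ x, p x ∂(ρ s)) - (∫ x, p x ∂(ρ 0))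
          - (∫ t in (0 : ℝ)..s, (∫ x, lapl p x ∂(ρ t)))
          + (∫ t in (0 : ℝ)..s, (∫ x, ⟪gradient Ψ x, gradient p x⟫ ∂(ρ t)))
          - (1 / 2) * (∫ t in (0 : ℝ)..s, (∫ x, ‖gradient p x‖ ^ 2 ∂(ρ t))) ≤ J) :
    (⨆ t ∈ Set.Icc (0 : ℝ) 1, ∫⁻ x, ENNReal.ofReal |Ψ x| ∂(ρ t)) < ⊤ ∧
    (∫⁻ t in Set.Icc (0 : ℝ) 1, ∫⁻ x, ENNReal.ofReal (‖gradient Ψ x‖ ^ 2) ∂(ρ t)) < ⊤ := by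
  obtain ⟨c, hc⟩ := hbelow
  obtain ⟨Cl, hCl⟩ := hlap
  let U : EuclideanSpace ℝ (Fin d) → ℝ := fun x => Ψ x - c
  have hfd : fderiv ℝ U = fderiv ℝ Ψ := by
    funext x; exact fderiv_sub_const c
  have hgr : gradient U = gradient Ψ := by
    funext x; simp only [gradient, hfd]
  have hla : lapl U = lapl Ψ := by
    funext x; simp only [lapl, hfd]
  have hU : ContDiff ℝ 2 U := hΨ.sub contDiff_const
  have hU0 : ∀ x, 0 ≤ U x := fun x => sub_nonneg.2 (hc x)
  obtain ⟨K, hK, q, h, qC, qcs, hcont, hcs, h0, q1, qU, qt, ht, key⟩ := tests hU hU0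
    (by rw [hla]; exact hCl) hC (by rw [hgr]; exact hgrowth)
  rw [hgr] at ht key
  have hI0 : (0:ℝ) ∈ Set.Icc (0:ℝ) 1 := by simp
  have hUint : Integrable U (ρ 0) := by
    have := hprob 0 hI0
    exact hΨint.sub (integrable_const c)
  set B : ℝ := J + ∫ x, U x ∂(ρ 0) with hB
  have q2 : ∀ n, ContDiff ℝ 2 (q n) := fun n => (qC n).of_le two_le_inf
  have hgcs : ∀ n, HasCompactSupport (gradient (q n)) := fun n =>
    ((qcs n).fderiv ℝ).comp_left (g := (InnerProductSpace.toDual ℝ _).symm) (map_zero _)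
  have c1 : ∀ n, Continuous (lapl (q n)) := fun n => lapl_cont (q2 n)
  have c2 : ∀ n, Continuous (fun x => ⟪gradient Ψ x, gradient (q n) x⟫) := fun n =>
    (grad_cont hΨ).inner (grad_cont (q2 n))
  have c3 : ∀ n, Continuous (fun x => ‖gradient (q n) x‖ ^ 2) := fun n =>
    (grad_cont (q2 n)).norm.pow 2
  have s1 : ∀ n, HasCompactSupport (lapl (q n)) := fun n => by
    have hf2 := ((qcs n).fderiv ℝ).fderiv ℝ
    refine hf2.mono fun x hx => ?_
    contrapose! hx
    simp only [Function.mem_support, not_not] at hx ⊢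
    rw [lapl_eq (q2 n), hx]; simp
  have s2 : ∀ n, HasCompactSupport (fun x => ⟪gradient Ψ x, gradient (q n) x⟫) := fun n => by
    refine (hgcs n).mono fun x hx => ?_
    contrapose! hx
    simp only [Function.mem_support, not_not] at hx ⊢
    rw [hx]; simp
  have s3 : ∀ n, HasCompactSupport (fun x => ‖gradient (q n) x‖ ^ 2) := fun n => by
    refine (hgcs n).mono fun x hx => ?_
    contrapose! hx
    simp only [Function.mem_support, not_not] at hx ⊢
    rw [hx]; simp
  have main : ∀ n, ∀ s ∈ Set.Icc (0:ℝ) 1, (∫ x, q n x ∂(ρ s))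
      + 1 / 2 * (∫ t in (0:ℝ)..s, ∫ x, h n x ∂(ρ t)) ≤ B + 1 + K := by
    intro n s hs
    have hII : ∀ f : EuclideanSpace ℝ (Fin d) → ℝ, Continuous f → HasCompactSupport f →
        IntervalIntegrable (fun t => ∫ x, f x ∂(ρ t)) volume 0 s := by
      intro f hf hfc
      refine ContinuousOn.intervalIntegrable ?_
      rw [Set.uIcc_of_le hs.1]
      exact (contF hnarrow hf hfc).mono (Set.Icc_subset_Icc_right hs.2)
    have i1 := hII _ (c1 n) (s1 n)
    have i2 := hII _ (c2 n) (s2 n)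
    have i3 := hII _ (c3 n) (s3 n)
    have i4 := hII _ (hcont n) (hcs n)
    have J1 := hJ (q n) (qC n) (qcs n) s hs
    have e0 : ∫ x, q n x ∂(ρ 0) ≤ (∫ x, U x ∂(ρ 0)) + 1 := by
      have := hprob 0 hI0
      have : (∫ x, U x ∂(ρ 0)) + 1 = ∫ x, (U x + 1) ∂(ρ 0) := by
        rw [integral_add hUint (integrable_const 1)]; simp
      rw [this]
      exact integral_mono ((qC n).continuous.integrable_of_hasCompactSupport (qcs n))
        (hUint.add (integrable_const 1)) (qU n)
    have e1 : ∫ t in (0:ℝ)..s, (1 / 2 * (∫ x, h n x ∂(ρ t)) - K) ≤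
        ∫ t in (0:ℝ)..s, (- (∫ x, lapl (q n) x ∂(ρ t))
          + (∫ x, ⟪gradient Ψ x, gradient (q n) x⟫ ∂(ρ t))
          - 1 / 2 * (∫ x, ‖gradient (q n) x‖ ^ 2 ∂(ρ t))) := by
      refine intervalIntegral.integral_mono_on hs.1
        ((i4.const_mul _).sub intervalIntegrable_const)
        ((i1.neg.add i2).sub (i3.const_mul _)) fun t ht' => ?_
      have := hprob t ⟨ht'.1, ht'.2.trans hs.2⟩
      have j1 := (c1 n).integrable_of_hasCompactSupport (s1 n) (μ := ρ t)
      have j2 := (c2 n).integrable_of_hasCompactSupport (s2 n) (μ := ρ t)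
      have j3 := (c3 n).integrable_of_hasCompactSupport (s3 n) (μ := ρ t)
      have j4 := (hcont n).integrable_of_hasCompactSupport (hcs n) (μ := ρ t)
      have l1 : ∫ x, (1 / 2 * h n x - K) ∂(ρ t) = 1 / 2 * (∫ x, h n x ∂(ρ t)) - K := by
        rw [integral_sub (j4.const_mul _) (integrable_const K), integral_const_mul]; simp
      have l2 : ∫ x, (- lapl (q n) x + ⟪gradient Ψ x, gradient (q n) x⟫
          - 1 / 2 * ‖gradient (q n) x‖ ^ 2) ∂(ρ t) = - (∫ x, lapl (q n) x ∂(ρ t))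
          + (∫ x, ⟪gradient Ψ x, gradient (q n) x⟫ ∂(ρ t))
          - 1 / 2 * (∫ x, ‖gradient (q n) x‖ ^ 2 ∂(ρ t)) := by
        have j1' : Integrable (fun x => - lapl (q n) x) (ρ t) := j1.neg
        have j12 : Integrable (fun x => - lapl (q n) x
          + ⟪gradient Ψ x, gradient (q n) x⟫) (ρ t) := j1'.add j2
        rw [integral_sub j12 (j3.const_mul _), integral_const_mul, integral_add j1' j2,
          integral_neg]
      rw [← l1, ← l2]
      exact integral_mono ((j4.const_mul _).sub (integrable_const K))
        ((j1.neg.add j2).sub (j3.const_mul _)) (key n)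
    have i1' : IntervalIntegrable (fun t => - ∫ x, lapl (q n) x ∂(ρ t)) volume 0 s := i1.neg
    have i12 : IntervalIntegrable (fun t => - (∫ x, lapl (q n) x ∂(ρ t))
      + ∫ x, ⟪gradient Ψ x, gradient (q n) x⟫ ∂(ρ t)) volume 0 s := i1'.add i2
    rw [intervalIntegral.integral_sub (i4.const_mul _) intervalIntegrable_const,
      intervalIntegral.integral_const_mul, intervalIntegral.integral_const,
      intervalIntegral.integral_sub i12 (i3.const_mul _),
      intervalIntegral.integral_const_mul, intervalIntegral.integral_add i1' i2,
      intervalIntegral.integral_neg] at e1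
    simp only [sub_zero, smul_eq_mul] at e1
    have e3 : s * K ≤ K := mul_le_of_le_one_left hK hs.2
    linarith
  have hneg : ∀ n, ∀ s ∈ Set.Icc (0:ℝ) 1, -1 ≤ ∫ x, q n x ∂(ρ s) := by
    intro n s hs
    have := hprob s hs
    have : ∫ x, (-1 : ℝ) ∂(ρ s) = -1 := by simp
    rw [← this]
    exact integral_mono (integrable_const _)
      ((qC n).continuous.integrable_of_hasCompactSupport (qcs n)) (q1 n)
  have hhn : ∀ n, ∀ s ∈ Set.Icc (0:ℝ) 1, 0 ≤ ∫ t in (0:ℝ)..s, ∫ x, h n x ∂(ρ t) := by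
    intro n s hs
    exact intervalIntegral.integral_nonneg hs.1 fun t _ => integral_nonneg (h0 n)
  constructor
  · refine lt_of_le_of_lt (b := ENNReal.ofReal (B + 1 + K + 1 + |c|)) ?_ ENNReal.ofReal_lt_top
    refine iSup₂_le fun s hs => ?_
    have := hprob s hs
    have fat : ∫⁻ x, ENNReal.ofReal (U x + (1 + |c|)) ∂(ρ s) ≤
        Filter.liminf (fun n => ∫⁻ x, ENNReal.ofReal (q n x + (1 + |c|)) ∂(ρ s)) Filter.atTop := by
      have : ∀ x, ENNReal.ofReal (U x + (1 + |c|)) =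
          Filter.liminf (fun n => ENNReal.ofReal (q n x + (1 + |c|))) Filter.atTop := fun x =>
        ((ENNReal.continuous_ofReal.tendsto _).comp ((qt x).add_const _)).liminf_eq.symm
      simp only [this]
      exact lintegral_liminf_le fun n =>
        ENNReal.measurable_ofReal.comp ((qC n).continuous.measurable.add_const _)
    refine le_trans (lintegral_mono fun x => ENNReal.ofReal_le_ofReal ?_) (fat.trans ?_)
    · have h1 := hU0 x
      have h2 : Ψ x = U x + c := by simp [U]
      rw [h2]
      refine (abs_add_le _ _).trans ?_
      rw [abs_of_nonneg h1]; linarith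
    · refine Filter.liminf_le_of_frequently_le' (Filter.Frequently.of_forall fun n => ?_)
      have jq := (qC n).continuous.integrable_of_hasCompactSupport (qcs n) (μ := ρ s)
      have jq' : Integrable (fun x => q n x + (1 + |c|)) (ρ s) := jq.add (integrable_const _)
      rw [← ofReal_integral_eq_lintegral_ofReal jq'
        (Filter.Eventually.of_forall fun x => by
          have := q1 n x
          have := abs_nonneg c
          simp only [Pi.zero_apply]; linarith)]
      refine ENNReal.ofReal_le_ofReal ?_
      have : ∫ x, (q n x + (1 + |c|)) ∂(ρ s) = (∫ x, q n x ∂(ρ s)) + (1 + |c|) := by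
        rw [integral_add jq (integrable_const _)]; simp
      rw [this]
      linarith [main n s hs, hhn n s hs]
  · refine lt_of_le_of_lt (b := ENNReal.ofReal (2 * (B + 1 + K + 1))) ?_ ENNReal.ofReal_lt_top
    have hI1 : (1:ℝ) ∈ Set.Icc (0:ℝ) 1 := by simp
    have e : ∀ n, ∀ t ∈ Set.Icc (0:ℝ) 1, ∫⁻ x, ENNReal.ofReal (h n x) ∂(ρ t) =
        ENNReal.ofReal (∫ x, h n x ∂(ρ t)) := by
      intro n t ht'
      have := hprob t ht'
      exact (ofReal_integral_eq_lintegral_ofReal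
        ((hcont n).integrable_of_hasCompactSupport (hcs n))
        (Filter.Eventually.of_forall (h0 n))).symm
    have fat1 : ∀ t, ∫⁻ x, ENNReal.ofReal (‖gradient Ψ x‖ ^ 2) ∂(ρ t) ≤
        Filter.liminf (fun n => ∫⁻ x, ENNReal.ofReal (h n x) ∂(ρ t)) Filter.atTop := by
      intro t
      have : ∀ x, ENNReal.ofReal (‖gradient Ψ x‖ ^ 2) =
          Filter.liminf (fun n => ENNReal.ofReal (h n x)) Filter.atTop := fun x =>
        ((ENNReal.continuous_ofReal.tendsto _).comp (ht x)).liminf_eq.symm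
      simp only [this]
      exact lintegral_liminf_le fun n => ENNReal.measurable_ofReal.comp (hcont n).measurable
    have hcF := fun n => contF hnarrow (hcont n) (hcs n)
    calc _ ≤ ∫⁻ t in Set.Icc (0:ℝ) 1,
          Filter.liminf (fun n => ENNReal.ofReal (∫ x, h n x ∂(ρ t))) Filter.atTop := by
          refine setLIntegral_mono' measurableSet_Icc fun t ht' => (fat1 t).trans (le_of_eq ?_)
          simp only [e _ t ht']
      _ ≤ Filter.liminf (fun n => ∫⁻ t in Set.Icc (0:ℝ) 1,
            ENNReal.ofReal (∫ x, h n x ∂(ρ t))) Filter.atTop :=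
          lintegral_liminf_le' fun n =>
            ENNReal.measurable_ofReal.comp_aemeasurable ((hcF n).aemeasurable measurableSet_Icc)
      _ ≤ _ := by
          refine Filter.liminf_le_of_frequently_le' (Filter.Frequently.of_forall fun n => ?_)
          have hint : IntegrableOn (fun t => ∫ x, h n x ∂(ρ t)) (Set.Icc (0:ℝ) 1) :=
            (hcF n).integrableOn_compact isCompact_Icc
          rw [← ofReal_integral_eq_lintegral_ofReal hint
            (Filter.Eventually.of_forall fun t => integral_nonneg (h0 n))]
          refine ENNReal.ofReal_le_ofReal ?_
          rw [integral_Icc_eq_integral_Ioc, ← intervalIntegral.integral_of_le zero_le_one]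
          linarith [main n 1 hI1, hneg n 1 hI1]
end

section
/- Let Ψ ∈ C²(ℝ^d) be convex, bounded from below, with ΔΨ bounded, and suppose there is a constant C > 0 such that |x| |∇Ψ(x)| ≤ C(1 + |x|²) for all x ∈ ℝ^d. Let (ρ_t)_{t∈[0,1]} be a narrowly continuous family of Borel probability measures on ℝ^d with ∫ Ψ dρ_0 < ∞, and suppose there is a finite constant J such that for every p ∈ C_c^∞(ℝ^d) and every s ∈ [0,1]: ∫ p dρ_s − ∫ p dρ_0 − ∫_0^s ∫ Δp dρ_t dt + ∫_0^s ∫ ∇Ψ · ∇p dρ_t dt − (1/2) ∫_0^s ∫ |∇p|² dρ_t dt ≤ J. Then for every δ ∈ (0,1] with α := 1/e − 5δC > 0, setting β := 3/(4e) − 1/4 > 0, one has α · sup_{t∈[0,δ]} ∫ |Ψ| dρ_t + β · ∫_0^δ ∫ |∇Ψ|² dρ_t dt ≤ 2J + (8/e) |inf Ψ| + (2/e) ∫ Ψ dρ_0 + 2δ + (2δ/e) ‖ΔΨ‖_∞. -/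
open MeasureTheory
open scoped RealInnerProductSpace

open Filter Topology

namespace QAux

/-- Partial derivative in the `i`-th coordinate direction. -/
noncomputable def D {d : ℕ} (f : EuclideanSpace ℝ (Fin d) → ℝ) (i : Fin d)
    (x : EuclideanSpace ℝ (Fin d)) : ℝ :=
  fderiv ℝ f x (EuclideanSpace.single i 1)

lemma lapl_eq {d : ℕ} (f : EuclideanSpace ℝ (Fin d) → ℝ) (x : EuclideanSpace ℝ (Fin d)) :
    lapl f x = ∑ i, D (D f i) i x := rfl

lemma gradient_coord {d : ℕ} (f : EuclideanSpace ℝ (Fin d) → ℝ)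
    (x : EuclideanSpace ℝ (Fin d)) (i : Fin d) : gradient f x i = D f i x := by
  have h : ⟪gradient f x, EuclideanSpace.single i (1 : ℝ)⟫ = D f i x := by
    unfold gradient D
    exact InnerProductSpace.toDual_symm_apply
  rw [← h, EuclideanSpace.inner_single_right]
  simp

lemma inner_gradient {d : ℕ} (f g : EuclideanSpace ℝ (Fin d) → ℝ)
    (x : EuclideanSpace ℝ (Fin d)) :
    ⟪gradient f x, gradient g x⟫ = ∑ i, D f i x * D g i x := by
  rw [PiLp.inner_apply]
  refine Finset.sum_congr rfl fun i _ => ?_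
  rw [gradient_coord, gradient_coord]
  simp [mul_comm]

lemma norm_sq_gradient {d : ℕ} (f : EuclideanSpace ℝ (Fin d) → ℝ)
    (x : EuclideanSpace ℝ (Fin d)) :
    ‖gradient f x‖ ^ 2 = ∑ i, D f i x ^ 2 := by
  rw [← real_inner_self_eq_norm_sq, inner_gradient]
  simp [sq]

lemma abs_D_le {d : ℕ} (f : EuclideanSpace ℝ (Fin d) → ℝ)
    (x : EuclideanSpace ℝ (Fin d)) (i : Fin d) : |D f i x| ≤ ‖gradient f x‖ := by
  rw [← gradient_coord]
  exact PiLp.norm_apply_le (gradient f x) i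

lemma contDiff_D {d : ℕ} {f : EuclideanSpace ℝ (Fin d) → ℝ} {m n : WithTop ℕ∞}
    (hf : ContDiff ℝ n f) (h : m + 1 ≤ n) (i : Fin d) : ContDiff ℝ m (D f i) :=
  (hf.fderiv_right h).clm_apply contDiff_const

lemma D_one {d : ℕ} {f : EuclideanSpace ℝ (Fin d) → ℝ}
    (hf : ContDiff ℝ 2 f) (i : Fin d) : ContDiff ℝ 1 (D f i) :=
  contDiff_D hf (by norm_num) i

lemma D_cont {d : ℕ} {f : EuclideanSpace ℝ (Fin d) → ℝ}
    (hf : ContDiff ℝ 1 f) (i : Fin d) : Continuous (D f i) :=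
  (contDiff_D (m := 0) hf (by norm_num) i).continuous

lemma hcs_D {d : ℕ} {f : EuclideanSpace ℝ (Fin d) → ℝ}
    (hf : HasCompactSupport f) (i : Fin d) : HasCompactSupport (D f i) :=
  hf.fderiv_apply (𝕜 := ℝ) _

/-- The integrand of the Hamiltonian. -/
noncomputable def F {d : ℕ} (Ψ p : EuclideanSpace ℝ (Fin d) → ℝ)
    (x : EuclideanSpace ℝ (Fin d)) : ℝ :=
  ∑ i, (- D (D p i) i x + D Ψ i x * D p i x - 1 / 2 * D p i x ^ 2)

section functional

variable {d : ℕ} {ρ : ℝ → Measure (EuclideanSpace ℝ (Fin d))}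

lemma contOn
    (hnarrow : ∀ φ : BoundedContinuousFunction (EuclideanSpace ℝ (Fin d)) ℝ,
      ContinuousOn (fun t => ∫ x, φ x ∂(ρ t)) (Set.Icc (0 : ℝ) 1))
    {f : EuclideanSpace ℝ (Fin d) → ℝ} (hf : Continuous f) {M : ℝ}
    (hM : ∀ x, |f x| ≤ M) : ContinuousOn (fun t => ∫ x, f x ∂(ρ t)) (Set.Icc (0 : ℝ) 1) :=
  hnarrow (BoundedContinuousFunction.ofNormedAddCommGroup f hf M hM)

lemma ivl
    (hnarrow : ∀ φ : BoundedContinuousFunction (EuclideanSpace ℝ (Fin d)) ℝ,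
      ContinuousOn (fun t => ∫ x, φ x ∂(ρ t)) (Set.Icc (0 : ℝ) 1))
    {f : EuclideanSpace ℝ (Fin d) → ℝ} (hf : Continuous f) {M : ℝ}
    (hM : ∀ x, |f x| ≤ M) {s : ℝ} (hs : s ∈ Set.Icc (0 : ℝ) 1) :
    IntervalIntegrable (fun t => ∫ x, f x ∂(ρ t)) volume 0 s := by
  apply ContinuousOn.intervalIntegrable
  rw [Set.uIcc_of_le hs.1]
  exact (contOn hnarrow hf hM).mono (Set.Icc_subset_Icc le_rfl hs.2)

lemma intg
    (hprob : ∀ t ∈ Set.Icc (0 : ℝ) 1, IsProbabilityMeasure (ρ t))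
    {f : EuclideanSpace ℝ (Fin d) → ℝ} (hf : Continuous f) {M : ℝ}
    (hM : ∀ x, |f x| ≤ M) {t : ℝ} (ht : t ∈ Set.Icc (0 : ℝ) 1) : Integrable f (ρ t) := by
  have := hprob t ht
  exact Integrable.of_bound hf.aestronglyMeasurable M (Eventually.of_forall hM)

lemma tendsto_inner
    (hprob : ∀ t ∈ Set.Icc (0 : ℝ) 1, IsProbabilityMeasure (ρ t))
    {f : ℕ → EuclideanSpace ℝ (Fin d) → ℝ} {g : EuclideanSpace ℝ (Fin d) → ℝ}
    (hf : ∀ n, Continuous (f n)) {M : ℝ} (hM : ∀ n x, |f n x| ≤ M)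
    (hlim : ∀ x, Tendsto (fun n => f n x) atTop (𝓝 (g x)))
    {t : ℝ} (ht : t ∈ Set.Icc (0 : ℝ) 1) :
    Tendsto (fun n => ∫ x, f n x ∂(ρ t)) atTop (𝓝 (∫ x, g x ∂(ρ t))) := by
  have := hprob t ht
  exact tendsto_integral_of_dominated_convergence (fun _ => M)
    (fun n => (hf n).aestronglyMeasurable) (integrable_const _)
    (fun n => Eventually.of_forall (hM n)) (Eventually.of_forall hlim)

lemma tendsto_outer
    (hprob : ∀ t ∈ Set.Icc (0 : ℝ) 1, IsProbabilityMeasure (ρ t))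
    (hnarrow : ∀ φ : BoundedContinuousFunction (EuclideanSpace ℝ (Fin d)) ℝ,
      ContinuousOn (fun t => ∫ x, φ x ∂(ρ t)) (Set.Icc (0 : ℝ) 1))
    {f : ℕ → EuclideanSpace ℝ (Fin d) → ℝ} {g : EuclideanSpace ℝ (Fin d) → ℝ}
    (hf : ∀ n, Continuous (f n)) {M : ℝ} (hM : ∀ n x, |f n x| ≤ M)
    (hlim : ∀ x, Tendsto (fun n => f n x) atTop (𝓝 (g x)))
    {s : ℝ} (hs : s ∈ Set.Icc (0 : ℝ) 1) :
    Tendsto (fun n => ∫ t in (0 : ℝ)..s, ∫ x, f n x ∂(ρ t)) atTop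
      (𝓝 (∫ t in (0 : ℝ)..s, ∫ x, g x ∂(ρ t))) := by
  have hsub : ∀ t, t ∈ Set.uIoc 0 s → t ∈ Set.Icc (0 : ℝ) 1 := by
    intro t ht
    rw [Set.uIoc_of_le hs.1] at ht
    exact ⟨ht.1.le, ht.2.trans hs.2⟩
  refine intervalIntegral.tendsto_integral_filter_of_dominated_convergence (fun _ => M)
    (Eventually.of_forall fun n => ?_) (Eventually.of_forall fun n =>
      Eventually.of_forall fun t ht => ?_)
    intervalIntegrable_const (Eventually.of_forall fun t ht => ?_)
  · exact ((contOn hnarrow (hf n) (hM n)).mono hsub).aestronglyMeasurable measurableSet_uIoc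
  · have := hprob t (hsub t ht)
    have := norm_integral_le_of_norm_le_const (μ := ρ t) (f := f n) (C := M) (Eventually.of_forall (hM n))
    simpa using this
  · exact tendsto_inner hprob hf hM hlim (hsub t ht)

lemma outer_mono
    (hprob : ∀ t ∈ Set.Icc (0 : ℝ) 1, IsProbabilityMeasure (ρ t))
    (hnarrow : ∀ φ : BoundedContinuousFunction (EuclideanSpace ℝ (Fin d)) ℝ,
      ContinuousOn (fun t => ∫ x, φ x ∂(ρ t)) (Set.Icc (0 : ℝ) 1))
    {f g : EuclideanSpace ℝ (Fin d) → ℝ} (hf : Continuous f) (hg : Continuous g)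
    {M N : ℝ} (hM : ∀ x, |f x| ≤ M) (hN : ∀ x, |g x| ≤ N) (hfg : ∀ x, f x ≤ g x)
    {s : ℝ} (hs : s ∈ Set.Icc (0 : ℝ) 1) :
    (∫ t in (0 : ℝ)..s, ∫ x, f x ∂(ρ t)) ≤ ∫ t in (0 : ℝ)..s, ∫ x, g x ∂(ρ t) := by
  refine intervalIntegral.integral_mono_on hs.1 (ivl hnarrow hf hM hs) (ivl hnarrow hg hN hs) ?_
  intro t ht
  have ht' : t ∈ Set.Icc (0 : ℝ) 1 := ⟨ht.1, ht.2.trans hs.2⟩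
  exact integral_mono (intg hprob hf hM ht') (intg hprob hg hN ht') hfg

lemma outer_add
    (hprob : ∀ t ∈ Set.Icc (0 : ℝ) 1, IsProbabilityMeasure (ρ t))
    (hnarrow : ∀ φ : BoundedContinuousFunction (EuclideanSpace ℝ (Fin d)) ℝ,
      ContinuousOn (fun t => ∫ x, φ x ∂(ρ t)) (Set.Icc (0 : ℝ) 1))
    {f g : EuclideanSpace ℝ (Fin d) → ℝ} (hf : Continuous f) (hg : Continuous g)
    {M N : ℝ} (hM : ∀ x, |f x| ≤ M) (hN : ∀ x, |g x| ≤ N) 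
    {s : ℝ} (hs : s ∈ Set.Icc (0 : ℝ) 1) :
    (∫ t in (0 : ℝ)..s, ∫ x, (f x + g x) ∂(ρ t)) =
      (∫ t in (0 : ℝ)..s, ∫ x, f x ∂(ρ t)) + ∫ t in (0 : ℝ)..s, ∫ x, g x ∂(ρ t) := by
  rw [← intervalIntegral.integral_add (ivl hnarrow hf hM hs) (ivl hnarrow hg hN hs)]
  refine intervalIntegral.integral_congr fun t ht => ?_
  rw [Set.uIcc_of_le hs.1] at ht
  have ht' : t ∈ Set.Icc (0 : ℝ) 1 := ⟨ht.1, ht.2.trans hs.2⟩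
  exact integral_add (intg hprob hf hM ht') (intg hprob hg hN ht')

lemma outer_smul (c : ℝ) (f : EuclideanSpace ℝ (Fin d) → ℝ) (s : ℝ) :
    (∫ t in (0 : ℝ)..s, ∫ x, c * f x ∂(ρ t)) =
      c * ∫ t in (0 : ℝ)..s, ∫ x, f x ∂(ρ t) := by
  simp_rw [integral_const_mul, intervalIntegral.integral_const_mul]

lemma hcs_bound {f : EuclideanSpace ℝ (Fin d) → ℝ} (hf : Continuous f)
    (hc : HasCompactSupport f) : ∃ M, ∀ x, |f x| ≤ M :=
  hc.exists_bound_of_continuous hf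

lemma F_cont {Ψ p : EuclideanSpace ℝ (Fin d) → ℝ} (hΨ : ContDiff ℝ 2 Ψ)
    (hp : ContDiff ℝ 2 p) : Continuous (F Ψ p) := by
  unfold F
  refine continuous_finsetSum _ fun i _ => ?_
  have h1 := D_cont (D_one hp i) i
  have h2 := D_cont (hp.of_le (by norm_num)) i
  have h3 := D_cont (hΨ.of_le (by norm_num)) i
  fun_prop

lemma smooth_case
    (hprob : ∀ t ∈ Set.Icc (0 : ℝ) 1, IsProbabilityMeasure (ρ t))
    (hnarrow : ∀ φ : BoundedContinuousFunction (EuclideanSpace ℝ (Fin d)) ℝ,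
      ContinuousOn (fun t => ∫ x, φ x ∂(ρ t)) (Set.Icc (0 : ℝ) 1))
    {Ψ : EuclideanSpace ℝ (Fin d) → ℝ}
    (hΨ : ContDiff ℝ 2 Ψ) {J : ℝ}
    (hJ : ∀ p : EuclideanSpace ℝ (Fin d) → ℝ, ContDiff ℝ (⊤ : ℕ∞) p → HasCompactSupport p →
      ∀ s ∈ Set.Icc (0 : ℝ) 1,
        (∫ x, p x ∂(ρ s)) - (∫ x, p x ∂(ρ 0))
          - (∫ t in (0 : ℝ)..s, (∫ x, lapl p x ∂(ρ t)))
          + (∫ t in (0 : ℝ)..s, (∫ x, ⟪gradient Ψ x, gradient p x⟫ ∂(ρ t)))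
          - (1 / 2) * (∫ t in (0 : ℝ)..s, (∫ x, ‖gradient p x‖ ^ 2 ∂(ρ t))) ≤ J)
    {p : EuclideanSpace ℝ (Fin d) → ℝ} (hp : ContDiff ℝ (⊤ : ℕ∞) p) (hc : HasCompactSupport p)
    {s : ℝ} (hs : s ∈ Set.Icc (0 : ℝ) 1) :
    (∫ x, p x ∂(ρ s)) - (∫ x, p x ∂(ρ 0)) + (∫ t in (0 : ℝ)..s, ∫ x, F Ψ p x ∂(ρ t)) ≤ J := by
  have hp2 : ContDiff ℝ 2 p := contDiff_infty.1 hp 2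
  have h1 : ∀ i, Continuous (D (D p i) i) := fun i => D_cont (D_one hp2 i) i
  have h2 : ∀ i, Continuous (D p i) := fun i => D_cont (hp2.of_le (by norm_num)) i
  have h3 : ∀ i, Continuous (D Ψ i) := fun i => D_cont (hΨ.of_le (by norm_num)) i
  have c1 : Continuous (lapl p) := continuous_finsetSum _ fun i _ => h1 i
  have c2 : Continuous (fun x => ∑ i, D Ψ i x * D p i x) :=
    continuous_finsetSum _ fun i _ => (h3 i).mul (h2 i)
  have c3 : Continuous (fun x => ∑ i, D p i x ^ 2) :=
    continuous_finsetSum _ fun i _ => (h2 i).pow 2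
  have z1 : ∀ i x, x ∉ tsupport p → D p i x = 0 := fun i x hx =>
    image_eq_zero_of_notMem_tsupport (fun h => hx (tsupport_fderiv_apply_subset ℝ _ h))
  have z2 : ∀ i x, x ∉ tsupport p → D (D p i) i x = 0 := fun i x hx =>
    image_eq_zero_of_notMem_tsupport (fun h => hx
      (tsupport_fderiv_apply_subset ℝ _ (tsupport_fderiv_apply_subset ℝ _ h)))
  obtain ⟨M1, b1⟩ := hcs_bound c1 (HasCompactSupport.intro hc fun x hx => by
    rw [lapl_eq]; exact Finset.sum_eq_zero fun i _ => z2 i x hx)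
  obtain ⟨M2, b2⟩ := hcs_bound c2 (HasCompactSupport.intro hc fun x hx =>
    Finset.sum_eq_zero fun i _ => by simp [z1 i x hx])
  obtain ⟨M3, b3⟩ := hcs_bound c3 (HasCompactSupport.intro hc fun x hx =>
    Finset.sum_eq_zero fun i _ => by simp [z1 i x hx])
  have key := hJ p hp hc s hs
  simp_rw [inner_gradient, norm_sq_gradient] at key
  have e : (∫ t in (0 : ℝ)..s, ∫ x, F Ψ p x ∂(ρ t)) =
      (∫ t in (0 : ℝ)..s, ∫ x, (((-1) * lapl p x + ∑ i, D Ψ i x * D p i x) +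
        (-(1/2)) * ∑ i, D p i x ^ 2) ∂(ρ t)) := by
    congr! 5 with t x
    rw [lapl_eq, F]
    simp only [Finset.sum_sub_distrib, Finset.sum_add_distrib, Finset.mul_sum, neg_mul,
      Finset.sum_neg_distrib, one_mul]
    ring
  have b1' : ∀ x, |(-1) * lapl p x| ≤ M1 := fun x => by
    rw [abs_mul]; simpa using b1 x
  have b3' : ∀ x, |(-(1/2)) * ∑ i, D p i x ^ 2| ≤ 1/2 * M3 := fun x => by
    rw [abs_mul, abs_neg, abs_of_pos (by norm_num : (0:ℝ) < 1/2)]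
    exact mul_le_mul_of_nonneg_left (b3 x) (by norm_num)
  have c1' : Continuous (fun x => (-1) * lapl p x) := continuous_const.mul c1
  have c12 : Continuous (fun x => (-1) * lapl p x + ∑ i, D Ψ i x * D p i x) := c1'.add c2
  have c3' : Continuous (fun x => (-(1/2)) * ∑ i, D p i x ^ 2) := continuous_const.mul c3
  rw [e, outer_add hprob hnarrow c12 c3'
    (M := M1 + M2) (N := 1/2 * M3)
    (fun x => (abs_add_le _ _).trans (add_le_add (b1' x) (b2 x))) b3' hs,
    outer_add hprob hnarrow c1' c2 b1' b2 hs, outer_smul, outer_smul]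
  linarith

end functional

/-- A sequence of bump functions. -/
noncomputable def bmp (d : ℕ) (n : ℕ) : ContDiffBump (0 : EuclideanSpace ℝ (Fin d)) where
  rIn := 1 / (2 * ((n : ℝ) + 1))
  rOut := 1 / ((n : ℝ) + 1)
  rIn_pos := by positivity
  rIn_lt_rOut := by
    apply one_div_lt_one_div_of_lt
    · positivity
    · have : (0 : ℝ) ≤ n := n.cast_nonneg
      linarith

/-- Mollification. -/
noncomputable def moll {d : ℕ} (n : ℕ) (g : EuclideanSpace ℝ (Fin d) → ℝ) :
    EuclideanSpace ℝ (Fin d) → ℝ :=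
  MeasureTheory.convolution ((bmp d n).normed volume) g (ContinuousLinearMap.lsmul ℝ ℝ) volume

lemma bmp_rOut_le (d n : ℕ) : (bmp d n).rOut ≤ 1 := by
  change 1 / ((n : ℝ) + 1) ≤ 1
  rw [div_le_one (by positivity)]
  have : (0 : ℝ) ≤ n := n.cast_nonneg
  linarith

lemma bmp_rOut_tendsto (d : ℕ) : Tendsto (fun n => (bmp d n).rOut) atTop (𝓝 0) :=
  tendsto_one_div_add_atTop_nhds_zero_nat

lemma moll_tendsto {d : ℕ} {g : EuclideanSpace ℝ (Fin d) → ℝ} (hg : Continuous g)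
    (x : EuclideanSpace ℝ (Fin d)) : Tendsto (fun n => moll n g x) atTop (𝓝 (g x)) :=
  ContDiffBump.convolution_tendsto_right_of_continuous (bmp_rOut_tendsto d) hg x

lemma moll_zero {d : ℕ} {g : EuclideanSpace ℝ (Fin d) → ℝ} {R : ℝ}
    (hg : ∀ x, R < ‖x‖ → g x = 0) (n : ℕ) (x : EuclideanSpace ℝ (Fin d)) (hx : R + 1 < ‖x‖) :
    moll n g x = 0 := by
  have hx0 : g x = 0 := hg x (by linarith)
  rw [← hx0]
  refine ContDiffBump.normed_convolution_eq_right fun y hy => ?_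
  rw [hx0]
  apply hg
  rw [Metric.mem_ball, dist_eq_norm] at hy
  have := bmp_rOut_le d n
  have h2 := norm_sub_norm_le x y
  rw [norm_sub_rev] at h2
  linarith

lemma moll_bound {d : ℕ} {g : EuclideanSpace ℝ (Fin d) → ℝ} (hg : Continuous g) {M : ℝ}
    (hM : ∀ x, |g x| ≤ M) (n : ℕ) (x : EuclideanSpace ℝ (Fin d)) :
    |moll n g x| ≤ 3 * M := by
  have h := ContDiffBump.dist_normed_convolution_le (φ := bmp d n) (μ := volume) (x₀ := x)
    (ε := 2 * M) (g := g) hg.aestronglyMeasurable (fun y _ => by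
      rw [Real.dist_eq]
      exact (abs_sub _ _).trans (by linarith [hM x, hM y]))
  rw [Real.dist_eq] at h
  change |moll n g x - g x| ≤ _ at h
  have h2 := abs_add_le (moll n g x - g x) (g x)
  rw [sub_add_cancel] at h2
  linarith [hM x]

lemma bmp_li (d n : ℕ) : LocallyIntegrable ((bmp d n).normed volume) volume :=
  ((bmp d n).continuous_normed).locallyIntegrable

lemma D_moll {d : ℕ} {g : EuclideanSpace ℝ (Fin d) → ℝ} (hg : ContDiff ℝ 1 g)
    (hc : HasCompactSupport g) (n : ℕ) (i : Fin d) : D (moll n g) i = moll n (D g i) := by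
  funext x
  have h := hc.hasFDerivAt_convolution_right (ContinuousLinearMap.lsmul ℝ ℝ) (bmp_li d n) hg x
  unfold D moll
  rw [h.fderiv]
  exact convolution_precompR_apply _ (bmp_li d n) (hc.fderiv (𝕜 := ℝ))
    (hg.continuous_fderiv (by norm_num)) _ _

lemma moll_smooth {d : ℕ} {g : EuclideanSpace ℝ (Fin d) → ℝ} (hg : Continuous g)
    (n : ℕ) : ContDiff ℝ (⊤ : ℕ∞) (moll n g) :=
  (bmp d n).hasCompactSupport_normed.contDiff_convolution_left _
    (bmp d n).contDiff_normed hg.locallyIntegrable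

lemma C2_case {d : ℕ} {ρ : ℝ → Measure (EuclideanSpace ℝ (Fin d))}
    (hprob : ∀ t ∈ Set.Icc (0 : ℝ) 1, IsProbabilityMeasure (ρ t))
    (hnarrow : ∀ φ : BoundedContinuousFunction (EuclideanSpace ℝ (Fin d)) ℝ,
      ContinuousOn (fun t => ∫ x, φ x ∂(ρ t)) (Set.Icc (0 : ℝ) 1))
    {Ψ : EuclideanSpace ℝ (Fin d) → ℝ}
    (hΨ : ContDiff ℝ 2 Ψ) {J : ℝ}
    (hJ : ∀ p : EuclideanSpace ℝ (Fin d) → ℝ, ContDiff ℝ (⊤ : ℕ∞) p → HasCompactSupport p →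
      ∀ s ∈ Set.Icc (0 : ℝ) 1,
        (∫ x, p x ∂(ρ s)) - (∫ x, p x ∂(ρ 0))
          - (∫ t in (0 : ℝ)..s, (∫ x, lapl p x ∂(ρ t)))
          + (∫ t in (0 : ℝ)..s, (∫ x, ⟪gradient Ψ x, gradient p x⟫ ∂(ρ t)))
          - (1 / 2) * (∫ t in (0 : ℝ)..s, (∫ x, ‖gradient p x‖ ^ 2 ∂(ρ t))) ≤ J)
    {p : EuclideanSpace ℝ (Fin d) → ℝ} (hp : ContDiff ℝ 2 p) (hc : HasCompactSupport p)
    {s : ℝ} (hs : s ∈ Set.Icc (0 : ℝ) 1) :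
    ((∫ x, p x ∂(ρ s)) - (∫ x, p x ∂(ρ 0)) + (∫ t in (0 : ℝ)..s, ∫ x, F Ψ p x ∂(ρ t)) ≤ J) ∧
      ∃ M, ∀ x, |F Ψ p x| ≤ M := by
  have hp1 : ContDiff ℝ 1 p := hp.of_le (by norm_num)
  have h1 : ∀ i, Continuous (D (D p i) i) := fun i => D_cont (D_one hp i) i
  have h2 : ∀ i, Continuous (D p i) := fun i => D_cont hp1 i
  have h3 : ∀ i, Continuous (D Ψ i) := fun i => D_cont (hΨ.of_le (by norm_num)) i
  obtain ⟨R, hR⟩ := hc.isCompact.isBounded.subset_closedBall (0 : EuclideanSpace ℝ (Fin d))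
  have hR' : ∀ x, R < ‖x‖ → x ∉ tsupport p := fun x hx h => by
    have := hR h
    rw [mem_closedBall_zero_iff] at this
    linarith
  have z0 : ∀ x, R < ‖x‖ → p x = 0 := fun x hx => image_eq_zero_of_notMem_tsupport (hR' x hx)
  have z1 : ∀ i x, R < ‖x‖ → D p i x = 0 := fun i x hx =>
    image_eq_zero_of_notMem_tsupport (fun h => hR' x hx (tsupport_fderiv_apply_subset ℝ _ h))
  choose M1 b1 using fun i => hcs_bound (h1 i) (hcs_D (hcs_D hc i) i)
  choose M2 b2 using fun i => hcs_bound (h2 i) (hcs_D hc i)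
  obtain ⟨M0, b0⟩ := hcs_bound hp.continuous hc
  have hb3 : ∀ i, ∃ M, 0 ≤ M ∧ ∀ x, ‖x‖ ≤ R + 1 → |D Ψ i x| ≤ M := fun i => by
    obtain ⟨M, hM⟩ := (isCompact_closedBall (0 : EuclideanSpace ℝ (Fin d)) (R + 1)).exists_bound_of_continuousOn
      (h3 i).continuousOn
    refine ⟨max M 0, le_max_right _ _, fun x hx => (hM x ?_).trans (le_max_left _ _)⟩
    rwa [mem_closedBall_zero_iff]
  choose M3 b3p b3 using hb3
  have hM2 : ∀ i, 0 ≤ M2 i := fun i => (abs_nonneg _).trans (b2 i 0)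
  have dm : ∀ n i, D (moll n p) i = moll n (D p i) := fun n i => D_moll hp1 hc n i
  have ddm : ∀ n i, D (D (moll n p) i) i = moll n (D (D p i) i) := fun n i => by
    rw [dm, D_moll (D_one hp i) (hcs_D hc i)]
  have hFn : ∀ n x, F Ψ (moll n p) x = ∑ i, (- moll n (D (D p i) i) x + D Ψ i x * moll n (D p i) x
      - 1 / 2 * moll n (D p i) x ^ 2) := fun n x => by
    simp only [F, ddm]
    simp only [dm]
  have hlim : ∀ x, Tendsto (fun n => F Ψ (moll n p) x) atTop (𝓝 (F Ψ p x)) := fun x => by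
    simp only [hFn]
    refine tendsto_finsetSum _ fun i _ => ?_
    exact (((moll_tendsto (h1 i) x).neg).add ((moll_tendsto (h2 i) x).const_mul _)).sub
      (((moll_tendsto (h2 i) x).pow 2).const_mul _)
  have sm : ∀ n, ContDiff ℝ (⊤ : ℕ∞) (moll n p) := fun n => moll_smooth hp.continuous n
  have hbd : ∀ n x, |F Ψ (moll n p) x| ≤
      ∑ i, (3 * M1 i + M3 i * (3 * M2 i) + 1 / 2 * (3 * M2 i) ^ 2) := fun n x => by
    rw [hFn]
    refine (Finset.abs_sum_le_sum_abs _ _).trans (Finset.sum_le_sum fun i _ => ?_)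
    have e1 := moll_bound (h1 i) (b1 i) n x
    have e2 := moll_bound (h2 i) (b2 i) n x
    have e3 : |D Ψ i x * moll n (D p i) x| ≤ M3 i * (3 * M2 i) := by
      by_cases hx : ‖x‖ ≤ R + 1
      · rw [abs_mul]
        exact mul_le_mul (b3 i x hx) e2 (abs_nonneg _) (b3p i)
      · rw [moll_zero (z1 i) n x (not_le.mp hx), mul_zero, abs_zero]
        exact mul_nonneg (b3p i) (by linarith [hM2 i])
    have e4 : moll n (D p i) x ^ 2 ≤ (3 * M2 i) ^ 2 := by
      rw [← sq_abs]
      exact pow_le_pow_left₀ (abs_nonneg _) e2 2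
    have e5 := sq_nonneg (moll n (D p i) x)
    rw [abs_le] at e1 e3 ⊢
    constructor <;> linarith [e1.1, e1.2, e3.1, e3.2]
  constructor
  · have T1 := tendsto_inner hprob (fun n => (sm n).continuous)
      (fun n => moll_bound hp.continuous b0 n) (moll_tendsto hp.continuous) hs
    have T2 := tendsto_inner hprob (fun n => (sm n).continuous)
      (fun n => moll_bound hp.continuous b0 n) (moll_tendsto hp.continuous)
      (show (0 : ℝ) ∈ Set.Icc (0 : ℝ) 1 by simp)
    have T3 := tendsto_outer hprob hnarrow
      (fun n => F_cont hΨ (contDiff_infty.1 (sm n) 2)) hbd hlim hs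
    refine le_of_tendsto ((T1.sub T2).add T3) (Eventually.of_forall fun n => ?_)
    refine smooth_case hprob hnarrow hΨ hJ (sm n) ?_ hs
    refine HasCompactSupport.intro (isCompact_closedBall 0 (R + 1)) fun x hx => ?_
    refine moll_zero z0 n x ?_
    rw [mem_closedBall_zero_iff] at hx
    exact not_le.mp hx
  · exact ⟨_, fun x => le_of_tendsto (hlim x).abs (Eventually.of_forall fun n => hbd n x)⟩

lemma D_comp {d : ℕ} {f : EuclideanSpace ℝ (Fin d) → ℝ} {g : ℝ → ℝ} {g' : ℝ}
    {x : EuclideanSpace ℝ (Fin d)} (hg : HasDerivAt g g' (f x)) (hf : DifferentiableAt ℝ f x)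
    (i : Fin d) : D (fun y => g (f y)) i x = g' * D f i x := by
  unfold D
  have h := hg.comp_hasFDerivAt x hf.hasFDerivAt
  have h2 : fderiv ℝ (fun y => g (f y)) x = g' • fderiv ℝ f x := h.fderiv
  rw [h2]
  simp

lemma D_mul {d : ℕ} {f g : EuclideanSpace ℝ (Fin d) → ℝ}
    {x : EuclideanSpace ℝ (Fin d)} (hf : DifferentiableAt ℝ f x) (hg : DifferentiableAt ℝ g x)
    (i : Fin d) : D (fun y => f y * g y) i x = f x * D g i x + D f i x * g x := by
  unfold D
  rw [fderiv_fun_mul hf hg]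
  simp [mul_comm]

lemma D_add {d : ℕ} {f g : EuclideanSpace ℝ (Fin d) → ℝ}
    {x : EuclideanSpace ℝ (Fin d)} (hf : DifferentiableAt ℝ f x) (hg : DifferentiableAt ℝ g x)
    (i : Fin d) : D (fun y => f y + g y) i x = D f i x + D g i x := by
  unfold D
  rw [fderiv_fun_add hf hg]
  simp

lemma D_scale {d : ℕ} {f : EuclideanSpace ℝ (Fin d) → ℝ} (hf : Differentiable ℝ f) (r : ℝ)
    (i : Fin d) (x : EuclideanSpace ℝ (Fin d)) : D (fun y => f (r • y)) i x = r * D f i (r • x) := by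
  unfold D
  have h1 : HasFDerivAt (fun y : EuclideanSpace ℝ (Fin d) => r • y)
      (r • ContinuousLinearMap.id ℝ (EuclideanSpace ℝ (Fin d))) x :=
    (hasFDerivAt_id x).const_smul r
  have h := (hf (r • x)).hasFDerivAt.comp x h1
  have h2 : fderiv ℝ (fun y => f (r • y)) x = _ := h.fderiv
  rw [h2]
  simp

/-- The fixed cutoff. -/
noncomputable def chi (d : ℕ) : ContDiffBump (0 : EuclideanSpace ℝ (Fin d)) where
  rIn := 1
  rOut := 2
  rIn_pos := by norm_num
  rIn_lt_rOut := by norm_num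

/-- The scale. -/
noncomputable def sc (n : ℕ) : ℝ := 1 / ((n : ℝ) + 1)

lemma sc_pos (n : ℕ) : 0 < sc n := by unfold sc; positivity

lemma sc_mul (n : ℕ) : sc n * ((n : ℝ) + 1) = 1 := by
  unfold sc; exact one_div_mul_cancel (by positivity)

lemma sc_le (n : ℕ) : sc n ≤ 1 := by
  have h1 := sc_mul n
  have h2 := sc_pos n
  have h3 : (0 : ℝ) ≤ n := n.cast_nonneg
  nlinarith

lemma sc_tendsto : Tendsto sc atTop (𝓝 0) := tendsto_one_div_add_atTop_nhds_zero_nat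

/-- The rescaled cutoff. -/
noncomputable def cut (d n : ℕ) (x : EuclideanSpace ℝ (Fin d)) : ℝ := chi d (sc n • x)

lemma cut_smooth (d n : ℕ) : ContDiff ℝ 2 (cut d n) :=
  (chi d).contDiff.comp (contDiff_const_smul (sc n))

lemma norm_sc {d : ℕ} (n : ℕ) (x : EuclideanSpace ℝ (Fin d)) : ‖sc n • x‖ = sc n * ‖x‖ := by
  rw [norm_smul, Real.norm_of_nonneg (sc_pos n).le]

lemma cut_one {d n : ℕ} {x : EuclideanSpace ℝ (Fin d)} (hx : ‖x‖ ≤ n + 1) : cut d n x = 1 := by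
  apply (chi d).one_of_mem_closedBall
  rw [mem_closedBall_zero_iff, norm_sc]
  change _ ≤ (1 : ℝ)
  rw [← sc_mul n]
  exact mul_le_mul_of_nonneg_left hx (sc_pos n).le

lemma cut_zero {d n : ℕ} {x : EuclideanSpace ℝ (Fin d)} (hx : 2 * ((n : ℝ) + 1) ≤ ‖x‖) :
    cut d n x = 0 := by
  apply (chi d).zero_of_le_dist
  rw [dist_zero_right, norm_sc]
  change (2 : ℝ) ≤ _
  have := mul_le_mul_of_nonneg_left hx (sc_pos n).le
  have h := sc_mul n
  nlinarith

lemma cut_nonneg {d n : ℕ} (x : EuclideanSpace ℝ (Fin d)) : 0 ≤ cut d n x := (chi d).nonneg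
lemma cut_le_one {d n : ℕ} (x : EuclideanSpace ℝ (Fin d)) : cut d n x ≤ 1 := (chi d).le_one

lemma cut_hcs (d n : ℕ) : HasCompactSupport (cut d n) := by
  refine HasCompactSupport.intro (isCompact_closedBall 0 (2 * ((n : ℝ) + 1))) fun x hx => ?_
  rw [mem_closedBall_zero_iff, not_le] at hx
  exact cut_zero hx.le

lemma cut_tendsto {d : ℕ} (x : EuclideanSpace ℝ (Fin d)) :
    Tendsto (fun n => cut d n x) atTop (𝓝 1) := by
  apply tendsto_const_nhds.congr'
  obtain ⟨k, hk⟩ := exists_nat_ge ‖x‖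
  filter_upwards [eventually_ge_atTop k] with n hn
  have : (k : ℝ) ≤ n := by exact_mod_cast hn
  exact (cut_one (by linarith)).symm

lemma chi_smooth (d : ℕ) : ContDiff ℝ 2 (chi d) := (chi d).contDiff

lemma D_cut (d n : ℕ) (i : Fin d) :
    D (cut d n) i = fun x => sc n * D (chi d) i (sc n • x) := by
  funext x
  exact D_scale ((chi_smooth d).differentiable (by norm_num)) (sc n) i x

lemma DD_cut (d n : ℕ) (i : Fin d) (x : EuclideanSpace ℝ (Fin d)) :
    D (D (cut d n) i) i x = sc n * (sc n * D (D (chi d) i) i (sc n • x)) := by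
  have hd : Differentiable ℝ (D (chi d) i) :=
    (D_one (chi_smooth d) i).differentiable (by norm_num)
  rw [D_cut]
  have hd2 : Differentiable ℝ (fun y => D (chi d) i (sc n • y)) :=
    hd.comp (differentiable_id.const_smul (sc n))
  have h := D_comp (f := fun y => D (chi d) i (sc n • y)) (g := fun z => sc n * z) (x := x)
    (hasDerivAt_const_mul (sc n)) (hd2 x) i
  rw [h, D_scale hd]

lemma D_chi_zero {d : ℕ} (i : Fin d) (y : EuclideanSpace ℝ (Fin d)) (hy : 2 < ‖y‖) :
    D (chi d) i y = 0 := by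
  refine image_eq_zero_of_notMem_tsupport (fun h => ?_)
  have h1 := tsupport_fderiv_apply_subset ℝ _ h
  rw [(chi d).tsupport_eq, mem_closedBall_zero_iff] at h1
  change ‖y‖ ≤ 2 at h1
  linarith

lemma ptwise {c a b u K g gg ci cii : ℝ} (hc : 0 ≤ c) (hc1 : c ≤ 1) (ha : 0 ≤ a) (ha1 : a ≤ 1)
    (hb : 0 ≤ b) (hu : 0 ≤ u) (huK : u ≤ K) :
    (-(c * a) * gg + 1 / 2 * (c * a * g ^ 2))
      - ((2 + K) * |g * ci| + K * |cii| + 1 / 2 * (K ^ 2 * ci ^ 2)) ≤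
    -(c * (a * gg - b * g ^ 2) + 2 * (ci * (a * g)) + cii * u) + g * (c * (a * g) + ci * u)
      - 1 / 2 * (c * (a * g) + ci * u) ^ 2 := by
  have hca : 0 ≤ c * a := mul_nonneg hc ha
  have hca1 : c * a ≤ 1 := mul_le_one₀ hc1 ha ha1
  have e1 : 0 ≤ c * b * g ^ 2 := mul_nonneg (mul_nonneg hc hb) (sq_nonneg _)
  have e2 : (c * a) ^ 2 * g ^ 2 ≤ c * a * g ^ 2 := by
    apply mul_le_mul_of_nonneg_right _ (sq_nonneg _)
    nlinarith
  have e3 : u ^ 2 * ci ^ 2 ≤ K ^ 2 * ci ^ 2 :=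
    mul_le_mul_of_nonneg_right (pow_le_pow_left₀ hu huK 2) (sq_nonneg _)
  have e4 : cii * u ≤ K * |cii| := by
    calc cii * u ≤ |cii| * u := mul_le_mul_of_nonneg_right (le_abs_self _) hu
      _ ≤ |cii| * K := mul_le_mul_of_nonneg_left huK (abs_nonneg _)
      _ = _ := mul_comm _ _
  have e5 : a * (g * ci) ≤ |g * ci| := by
    calc a * (g * ci) ≤ a * |g * ci| := mul_le_mul_of_nonneg_left (le_abs_self _) ha
      _ ≤ 1 * |g * ci| := mul_le_mul_of_nonneg_right ha1 (abs_nonneg _)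
      _ = _ := one_mul _
  have hw : 0 ≤ u * (1 - c * a) := mul_nonneg hu (by linarith)
  have hw1 : u * (1 - c * a) ≤ K := by nlinarith
  have e6 : -(K * |g * ci|) ≤ u * (1 - c * a) * (g * ci) := by
    calc -(K * |g * ci|) ≤ -(u * (1 - c * a) * |g * ci|) :=
          neg_le_neg (mul_le_mul_of_nonneg_right hw1 (abs_nonneg _))
      _ = u * (1 - c * a) * (-|g * ci|) := by ring
      _ ≤ _ := mul_le_mul_of_nonneg_left (neg_abs_le _) hw
  nlinarith [e1, e2, e3, e4, e5, e6]

section stage2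

variable {d : ℕ}

/-- Concave truncation of `Ψ - m`. -/
noncomputable def uu (Ψ : EuclideanSpace ℝ (Fin d) → ℝ) (m ε : ℝ)
    (x : EuclideanSpace ℝ (Fin d)) : ℝ := (Ψ x - m) / (1 + ε * (Ψ x - m))

/-- First derivative of the truncation, as a coefficient. -/
noncomputable def aa (Ψ : EuclideanSpace ℝ (Fin d) → ℝ) (m ε : ℝ)
    (x : EuclideanSpace ℝ (Fin d)) : ℝ := 1 / (1 + ε * (Ψ x - m)) ^ 2

/-- Minus the second derivative of the truncation, as a coefficient. -/
noncomputable def bb (Ψ : EuclideanSpace ℝ (Fin d) → ℝ) (m ε : ℝ)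
    (x : EuclideanSpace ℝ (Fin d)) : ℝ := 2 * ε / (1 + ε * (Ψ x - m)) ^ 3

variable {Ψ : EuclideanSpace ℝ (Fin d) → ℝ} {m ε : ℝ}


lemma den_ge (hm : ∀ x, m ≤ Ψ x) (hε : 0 < ε)
    (x : EuclideanSpace ℝ (Fin d)) : 1 ≤ 1 + ε * (Ψ x - m) := by
  have := mul_nonneg hε.le (sub_nonneg.2 (hm x))
  linarith

lemma den_pos (hm : ∀ x, m ≤ Ψ x) (hε : 0 < ε)
    (x : EuclideanSpace ℝ (Fin d)) : 0 < 1 + ε * (Ψ x - m) :=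
  lt_of_lt_of_le one_pos (den_ge hm hε x)

lemma uu_nonneg (hm : ∀ x, m ≤ Ψ x) (hε : 0 < ε)
    (x : EuclideanSpace ℝ (Fin d)) : 0 ≤ uu Ψ m ε x :=
  div_nonneg (sub_nonneg.2 (hm x)) (den_pos hm hε x).le

lemma uu_le (hm : ∀ x, m ≤ Ψ x) (hε : 0 < ε)
    (x : EuclideanSpace ℝ (Fin d)) : uu Ψ m ε x ≤ 1 / ε := by
  unfold uu
  rw [div_le_div_iff₀ (den_pos hm hε x) hε]
  linarith

lemma uu_le' (hm : ∀ x, m ≤ Ψ x) (hε : 0 < ε)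
    (x : EuclideanSpace ℝ (Fin d)) : uu Ψ m ε x ≤ Ψ x - m :=
  div_le_self (sub_nonneg.2 (hm x)) (den_ge hm hε x)

lemma aa_nonneg (hm : ∀ x, m ≤ Ψ x) (hε : 0 < ε)
    (x : EuclideanSpace ℝ (Fin d)) : 0 ≤ aa Ψ m ε x := by
  have := den_pos hm hε x
  unfold aa; positivity

lemma aa_le (hm : ∀ x, m ≤ Ψ x) (hε : 0 < ε)
    (x : EuclideanSpace ℝ (Fin d)) : aa Ψ m ε x ≤ 1 := by
  have := den_pos hm hε x
  unfold aa
  rw [div_le_one (by positivity)]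
  exact one_le_pow₀ (den_ge hm hε x)

lemma bb_nonneg (hm : ∀ x, m ≤ Ψ x) (hε : 0 < ε)
    (x : EuclideanSpace ℝ (Fin d)) : 0 ≤ bb Ψ m ε x := by
  have := den_pos hm hε x
  unfold bb; positivity


lemma uu_smooth (hΨ : ContDiff ℝ 2 Ψ) (hm : ∀ x, m ≤ Ψ x) (hε : 0 < ε)
    : ContDiff ℝ 2 (uu Ψ m ε) := by
  unfold uu
  exact (hΨ.sub contDiff_const).div
    (contDiff_const.add (contDiff_const.mul (hΨ.sub contDiff_const)))
    fun x => (den_pos hm hε x).ne'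

lemma aa_smooth (hΨ : ContDiff ℝ 2 Ψ) (hm : ∀ x, m ≤ Ψ x) (hε : 0 < ε)
    : ContDiff ℝ 2 (aa Ψ m ε) := by
  unfold aa
  exact contDiff_const.div
    ((contDiff_const.add (contDiff_const.mul (hΨ.sub contDiff_const))).pow 2)
    fun x => (pow_pos (den_pos hm hε x) 2).ne'

lemma D_uu (hΨ : ContDiff ℝ 2 Ψ) (hm : ∀ x, m ≤ Ψ x) (hε : 0 < ε)
    (i : Fin d) : D (uu Ψ m ε) i = fun x => aa Ψ m ε x * D Ψ i x := by
  funext x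
  have hd := den_pos hm hε x
  refine D_comp (g := fun z => (z - m) / (1 + ε * (z - m))) ?_
    (hΨ.differentiable (by norm_num) x) i
  have h1 : HasDerivAt (fun z : ℝ => z - m) 1 (Ψ x) := (hasDerivAt_id _).sub_const m
  have h2 : HasDerivAt (fun z : ℝ => 1 + ε * (z - m)) (ε * 1) (Ψ x) :=
    (h1.const_mul ε).const_add 1
  refine (h1.fun_div h2 hd.ne').congr_deriv ?_
  unfold aa
  congr 1
  ring

lemma D_aa (hΨ : ContDiff ℝ 2 Ψ) (hm : ∀ x, m ≤ Ψ x) (hε : 0 < ε)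
    (i : Fin d) (x : EuclideanSpace ℝ (Fin d)) :
    D (aa Ψ m ε) i x = - bb Ψ m ε x * D Ψ i x := by
  have hd := den_pos hm hε x
  refine D_comp (g := fun z => 1 / (1 + ε * (z - m)) ^ 2) ?_
    (hΨ.differentiable (by norm_num) x) i
  have h1 : HasDerivAt (fun z : ℝ => z - m) 1 (Ψ x) := (hasDerivAt_id _).sub_const m
  have h2 : HasDerivAt (fun z : ℝ => 1 + ε * (z - m)) (ε * 1) (Ψ x) :=
    (h1.const_mul ε).const_add 1
  refine ((hasDerivAt_const (Ψ x) (1 : ℝ)).fun_div (h2.fun_pow 2)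
    (pow_pos hd 2).ne').congr_deriv ?_
  unfold bb
  field_simp
  ring

lemma D_p (hΨ : ContDiff ℝ 2 Ψ) (hm : ∀ x, m ≤ Ψ x) (hε : 0 < ε)
    (n : ℕ) (i : Fin d) : D (fun x => cut d n x * uu Ψ m ε x) i =
    fun x => cut d n x * (aa Ψ m ε x * D Ψ i x) + D (cut d n) i x * uu Ψ m ε x := by
  funext x
  rw [D_mul ((cut_smooth d n).differentiable (by norm_num) x)
    ((uu_smooth hΨ hm hε).differentiable (by norm_num) x), D_uu hΨ hm hε]

lemma DD_p (hΨ : ContDiff ℝ 2 Ψ) (hm : ∀ x, m ≤ Ψ x) (hε : 0 < ε)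
    (n : ℕ) (i : Fin d) (x : EuclideanSpace ℝ (Fin d)) :
    D (D (fun x => cut d n x * uu Ψ m ε x) i) i x =
    cut d n x * (aa Ψ m ε x * D (D Ψ i) i x - bb Ψ m ε x * D Ψ i x ^ 2)
      + 2 * (D (cut d n) i x * (aa Ψ m ε x * D Ψ i x)) + D (D (cut d n) i) i x * uu Ψ m ε x := by
  have d1 := (cut_smooth d n).differentiable (by norm_num) x
  have d2 := (uu_smooth hΨ hm hε).differentiable (by norm_num) x
  have d3 := (aa_smooth hΨ hm hε).differentiable (by norm_num) x
  have d4 := (D_one hΨ i).differentiable (by norm_num) x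
  have d5 := (D_one (cut_smooth d n) i).differentiable (by norm_num) x
  rw [D_p hΨ hm hε, D_add (d1.fun_mul (d3.fun_mul d4)) (d5.fun_mul d2), D_mul d1 (d3.fun_mul d4), D_mul d3 d4,
    D_mul d5 d2, D_aa hΨ hm hε, D_uu hΨ hm hε]
  ring

/-- Cutoff error. -/
noncomputable def Er (Ψ : EuclideanSpace ℝ (Fin d) → ℝ) (K : ℝ) (n : ℕ)
    (x : EuclideanSpace ℝ (Fin d)) : ℝ :=
  ∑ i, ((2 + K) * |D Ψ i x * D (cut d n) i x| + K * |D (D (cut d n) i) i x|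
    + 1 / 2 * (K ^ 2 * D (cut d n) i x ^ 2))

lemma F_lower (hΨ : ContDiff ℝ 2 Ψ) (hm : ∀ x, m ≤ Ψ x) (hε : 0 < ε)
    {L : ℝ} (hL : ∀ x, |lapl Ψ x| ≤ L) (n : ℕ) (x : EuclideanSpace ℝ (Fin d)) :
    (1 / 2 * (cut d n x * aa Ψ m ε x * ‖gradient Ψ x‖ ^ 2) - L) - Er Ψ (1 / ε) n x ≤
      F Ψ (fun x => cut d n x * uu Ψ m ε x) x := by
  unfold F
  simp only [DD_p hΨ hm hε]
  simp only [D_p hΨ hm hε]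
  have h := Finset.sum_le_sum (s := Finset.univ) fun (i : Fin d) _ =>
    ptwise (g := D Ψ i x) (gg := D (D Ψ i) i x) (ci := D (cut d n) i x)
      (cii := D (D (cut d n) i) i x)
      (cut_nonneg (n := n) x) (cut_le_one (n := n) x) (aa_nonneg hm hε x) (aa_le hm hε x)
      (bb_nonneg hm hε x) (uu_nonneg hm hε x) (uu_le hm hε x)
  refine le_trans ?_ h
  rw [Finset.sum_sub_distrib, Finset.sum_add_distrib, ← Finset.mul_sum, ← Finset.mul_sum,
    ← Finset.mul_sum, ← lapl_eq, ← norm_sq_gradient]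
  change _ ≤ _ - Er Ψ (1 / ε) n x
  have hca : 0 ≤ cut d n x * aa Ψ m ε x := mul_nonneg (cut_nonneg x) (aa_nonneg hm hε x)
  have hca1 : cut d n x * aa Ψ m ε x ≤ 1 :=
    mul_le_one₀ (cut_le_one x) (aa_nonneg hm hε x) (aa_le hm hε x)
  have h1 : cut d n x * aa Ψ m ε x * lapl Ψ x ≤ L := by
    calc cut d n x * aa Ψ m ε x * lapl Ψ x ≤ cut d n x * aa Ψ m ε x * |lapl Ψ x| :=
          mul_le_mul_of_nonneg_left (le_abs_self _) hca
      _ ≤ 1 * |lapl Ψ x| := mul_le_mul_of_nonneg_right hca1 (abs_nonneg _)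
      _ ≤ L := by rw [one_mul]; exact hL x
  linarith


lemma Er_cont (hΨ : ContDiff ℝ 2 Ψ)
    (K : ℝ) (n : ℕ) : Continuous (Er Ψ K n) := by
  unfold Er
  refine continuous_finsetSum _ fun i _ => ?_
  have h1 := D_cont (D_one (cut_smooth d n) i) i
  have h2 := D_cont ((cut_smooth d n).of_le (by norm_num)) i
  have h3 := D_cont (hΨ.of_le (by norm_num)) i
  fun_prop

lemma Er_tendsto (K : ℝ) (x : EuclideanSpace ℝ (Fin d)) :
    Tendsto (fun n => Er Ψ K n x) atTop (𝓝 0) := by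
  have h0 : Tendsto (fun n => sc n • x) atTop (𝓝 0) := by
    simpa using sc_tendsto.smul_const x
  have : (0 : ℝ) = ∑ i : Fin d, ((2 + K) * |D Ψ i x * 0| + K * |(0 : ℝ)| + 1 / 2 * (K ^ 2 * 0 ^ 2)) := by
    simp
  rw [this]
  unfold Er
  refine tendsto_finsetSum _ fun i _ => ?_
  have t1 : Tendsto (fun n => D (cut d n) i x) atTop (𝓝 0) := by
    simp only [D_cut]
    have := sc_tendsto.mul (((D_cont ((chi_smooth d).of_le (by norm_num)) i).tendsto 0).comp h0)
    simpa using this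
  have t2 : Tendsto (fun n => D (D (cut d n) i) i x) atTop (𝓝 0) := by
    simp only [DD_cut]
    have := sc_tendsto.mul (sc_tendsto.mul
      (((D_cont (D_one (chi_smooth d) i) i).tendsto 0).comp h0))
    simpa using this
  exact (((t1.const_mul _).abs.const_mul _).add (t2.abs.const_mul _)).add
    (((t1.pow 2).const_mul _).const_mul _)

lemma grad_growth (hΨ : ContDiff ℝ 2 Ψ)
    {C : ℝ} (hC : 0 < C)
    (hgrowth : ∀ x, ‖x‖ * ‖gradient Ψ x‖ ≤ C * (1 + ‖x‖ ^ 2)) :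
    ∃ C', 0 ≤ C' ∧ ∀ i x, |D Ψ i x| ≤ C' * (1 + ‖x‖) := by
  have h3 : ∀ i, Continuous (D Ψ i) := fun i => D_cont (hΨ.of_le (by norm_num)) i
  choose M hM using fun i => (isCompact_closedBall (0 : EuclideanSpace ℝ (Fin d))
    1).exists_bound_of_continuousOn (h3 i).continuousOn
  refine ⟨C + ∑ i, |M i|, by positivity, fun i x => ?_⟩
  have hs : |M i| ≤ ∑ i, |M i| :=
    Finset.single_le_sum (f := fun i => |M i|) (fun j _ => abs_nonneg _) (Finset.mem_univ i)
  have hx0 := norm_nonneg x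
  by_cases hx : ‖x‖ ≤ 1
  · have h1 := hM i x (by rwa [mem_closedBall_zero_iff])
    rw [Real.norm_eq_abs] at h1
    have h2 := le_abs_self (M i)
    have h4 : 0 ≤ (C + ∑ i, |M i|) * ‖x‖ := by positivity
    nlinarith
  · have hx1 : 1 < ‖x‖ := not_le.mp hx
    have h1 : ‖x‖ * ‖gradient Ψ x‖ ≤ ‖x‖ * (C * (1 + ‖x‖)) := by
      refine (hgrowth x).trans ?_
      nlinarith [mul_nonneg hC.le (sub_nonneg.2 hx1.le)]
    have h2 := le_of_mul_le_mul_left h1 (by linarith)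
    have h4 : 0 ≤ (∑ i, |M i|) * (1 + ‖x‖) := by positivity
    have h5 := abs_D_le Ψ x i
    nlinarith

lemma Er_bound (hΨ : ContDiff ℝ 2 Ψ)
    {C : ℝ} (hC : 0 < C)
    (hgrowth : ∀ x, ‖x‖ * ‖gradient Ψ x‖ ≤ C * (1 + ‖x‖ ^ 2)) {K : ℝ} (hK : 0 ≤ K) :
    ∃ M, ∀ n x, |Er Ψ K n x| ≤ M := by
  obtain ⟨C', hC', hg⟩ := grad_growth hΨ hC hgrowth
  choose A hA using fun i => hcs_bound (D_cont ((chi_smooth d).of_le (by norm_num)) i)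
    (hcs_D (chi d).hasCompactSupport i)
  choose B hB using fun i => hcs_bound (D_cont (D_one (chi_smooth d) i) i)
    (hcs_D (hcs_D (chi d).hasCompactSupport i) i)
  refine ⟨∑ i, ((2 + K) * (3 * C' * A i) + K * B i + 1 / 2 * (K ^ 2 * A i ^ 2)), fun n x => ?_⟩
  unfold Er
  have hr := sc_pos n
  have hr1 := sc_le n
  rw [abs_of_nonneg (Finset.sum_nonneg fun i _ => by positivity)]
  refine Finset.sum_le_sum fun i _ => ?_
  have hA0 : 0 ≤ A i := (abs_nonneg _).trans (hA i 0)
  have hB0 : 0 ≤ B i := (abs_nonneg _).trans (hB i 0)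
  have k1 : |D (cut d n) i x| ≤ A i := by
    rw [D_cut, abs_mul, abs_of_pos hr]
    calc sc n * |D (chi d) i (sc n • x)| ≤ 1 * A i :=
          mul_le_mul hr1 (hA i _) (abs_nonneg _) zero_le_one
      _ = A i := one_mul _
  have k2 : |D (D (cut d n) i) i x| ≤ B i := by
    rw [DD_cut, abs_mul, abs_mul, abs_of_pos hr]
    calc sc n * (sc n * |D (D (chi d) i) i (sc n • x)|) ≤ 1 * (1 * B i) := by
          refine mul_le_mul hr1 (mul_le_mul hr1 (hB i _) (abs_nonneg _) zero_le_one)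
            (by positivity) zero_le_one
      _ = B i := by ring
  have k3 : |D Ψ i x * D (cut d n) i x| ≤ 3 * C' * A i := by
    by_cases hx : 2 < ‖sc n • x‖
    · rw [D_cut]
      simp only [D_chi_zero i _ hx, mul_zero, abs_zero]
      positivity
    · rw [not_lt, norm_sc] at hx
      rw [D_cut, abs_mul, abs_mul, abs_of_pos hr]
      have h1 : |D Ψ i x| * sc n ≤ 3 * C' := by
        calc |D Ψ i x| * sc n ≤ C' * (1 + ‖x‖) * sc n :=
              mul_le_mul_of_nonneg_right (hg i x) hr.le
          _ = C' * (sc n + sc n * ‖x‖) := by ring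
          _ ≤ C' * 3 := mul_le_mul_of_nonneg_left (by linarith) hC'
          _ = 3 * C' := mul_comm _ _
      rw [← mul_assoc]
      exact mul_le_mul h1 (hA i _) (abs_nonneg _) (by positivity)
  have k4 : D (cut d n) i x ^ 2 ≤ A i ^ 2 := by
    rw [← sq_abs]; exact pow_le_pow_left₀ (abs_nonneg _) k1 2
  gcongr

end stage2

lemma main_eps {d : ℕ} {ρ : ℝ → Measure (EuclideanSpace ℝ (Fin d))}
    (hprob : ∀ t ∈ Set.Icc (0 : ℝ) 1, IsProbabilityMeasure (ρ t))
    (hnarrow : ∀ φ : BoundedContinuousFunction (EuclideanSpace ℝ (Fin d)) ℝ,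
      ContinuousOn (fun t => ∫ x, φ x ∂(ρ t)) (Set.Icc (0 : ℝ) 1))
    {Ψ : EuclideanSpace ℝ (Fin d) → ℝ}
    (hΨ : ContDiff ℝ 2 Ψ) {C : ℝ} (hC : 0 < C)
    (hgrowth : ∀ x, ‖x‖ * ‖gradient Ψ x‖ ≤ C * (1 + ‖x‖ ^ 2)) {J : ℝ}
    (hJ : ∀ p : EuclideanSpace ℝ (Fin d) → ℝ, ContDiff ℝ (⊤ : ℕ∞) p → HasCompactSupport p →
      ∀ s ∈ Set.Icc (0 : ℝ) 1,
        (∫ x, p x ∂(ρ s)) - (∫ x, p x ∂(ρ 0))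
          - (∫ t in (0 : ℝ)..s, (∫ x, lapl p x ∂(ρ t)))
          + (∫ t in (0 : ℝ)..s, (∫ x, ⟪gradient Ψ x, gradient p x⟫ ∂(ρ t)))
          - (1 / 2) * (∫ t in (0 : ℝ)..s, (∫ x, ‖gradient p x‖ ^ 2 ∂(ρ t))) ≤ J)
    {m L ε : ℝ} (hm : ∀ x, m ≤ Ψ x) (hL : ∀ x, |lapl Ψ x| ≤ L) (hε : 0 < ε) (N : ℕ)
    {s : ℝ} (hs : s ∈ Set.Icc (0 : ℝ) 1) :
    Continuous (fun x => cut d N x * aa Ψ m ε x * ‖gradient Ψ x‖ ^ 2) ∧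
    (∃ M, ∀ x, |cut d N x * aa Ψ m ε x * ‖gradient Ψ x‖ ^ 2| ≤ M) ∧
    (∫ x, uu Ψ m ε x ∂(ρ s)) + 1 / 2 *
      (∫ t in (0 : ℝ)..s, ∫ x, cut d N x * aa Ψ m ε x * ‖gradient Ψ x‖ ^ 2 ∂(ρ t)) ≤
      J + s * L + ∫ x, uu Ψ m ε x ∂(ρ 0) := by
  have cu := (uu_smooth hΨ hm hε)
  have ca := (aa_smooth hΨ hm hε).continuous
  have cg : Continuous (fun x => ‖gradient Ψ x‖ ^ 2) := by
    simp_rw [norm_sq_gradient]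
    exact continuous_finsetSum _ fun i _ => (D_cont (hΨ.of_le (by norm_num)) i).pow 2
  set G : EuclideanSpace ℝ (Fin d) → ℝ :=
    fun x => cut d N x * aa Ψ m ε x * ‖gradient Ψ x‖ ^ 2 with hG
  have cG : Continuous G := ((cut_smooth d N).continuous.mul ca).mul cg
  obtain ⟨M, hM⟩ := hcs_bound cG (HasCompactSupport.intro (cut_hcs d N) fun x hx => by
    simp [hG, image_eq_zero_of_notMem_tsupport hx])
  obtain ⟨M', hM'⟩ := Er_bound hΨ hC hgrowth (K := 1 / ε) (by positivity)
  have hL0 : 0 ≤ L := (abs_nonneg _).trans (hL 0)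
  refine ⟨cG, ⟨M, hM⟩, ?_⟩
  have h0 : (0 : ℝ) ∈ Set.Icc (0 : ℝ) 1 := by simp
  have bp : ∀ n x, |cut d n x * uu Ψ m ε x| ≤ 1 / ε := fun n x => by
    rw [abs_of_nonneg (mul_nonneg (cut_nonneg x) (uu_nonneg hm hε x))]
    calc cut d n x * uu Ψ m ε x ≤ 1 * (1 / ε) :=
          mul_le_mul (cut_le_one x) (uu_le hm hε x) (uu_nonneg hm hε x) zero_le_one
      _ = _ := one_mul _
  have cp : ∀ n, ContDiff ℝ 2 (fun x => cut d n x * uu Ψ m ε x) := fun n =>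
    (cut_smooth d n).mul cu
  have tp : ∀ x, Tendsto (fun n => cut d n x * uu Ψ m ε x) atTop (𝓝 (uu Ψ m ε x)) := fun x => by
    simpa using (cut_tendsto x).mul_const (uu Ψ m ε x)
  have T1 := tendsto_inner hprob (fun n => (cp n).continuous) bp tp hs
  have T2 := tendsto_inner hprob (fun n => (cp n).continuous) bp tp h0
  have cq : ∀ n, Continuous (fun x => (1 / 2 * G x + (-L)) - Er Ψ (1 / ε) n x) := fun n =>
    ((continuous_const.mul cG).add continuous_const).sub (Er_cont hΨ _ n)
  have bG : ∀ x, |1 / 2 * G x| ≤ 1 / 2 * M := fun x => by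
    rw [abs_mul, abs_of_pos (by norm_num : (0:ℝ) < 1/2)]
    exact mul_le_mul_of_nonneg_left (hM x) (by norm_num)
  have bL : ∀ x : EuclideanSpace ℝ (Fin d), |(-L)| ≤ L := fun x => by
    rw [abs_neg, abs_of_nonneg hL0]
  have bq : ∀ n x, |(1 / 2 * G x + (-L)) - Er Ψ (1 / ε) n x| ≤ 1 / 2 * M + L + M' := fun n x => by
    refine (abs_sub _ _).trans (add_le_add ((abs_add_le _ _).trans
      (add_le_add (bG x) (bL x))) (hM' n x))
  have tq : ∀ x, Tendsto (fun n => (1 / 2 * G x + (-L)) - Er Ψ (1 / ε) n x) atTop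
      (𝓝 (1 / 2 * G x + (-L))) := fun x => by
    simpa using (Er_tendsto (Ψ := Ψ) (1 / ε) x).const_sub (1 / 2 * G x + (-L))
  have T3 := tendsto_outer hprob hnarrow cq bq tq hs
  have key : (∫ x, uu Ψ m ε x ∂(ρ s)) - (∫ x, uu Ψ m ε x ∂(ρ 0)) +
      (∫ t in (0 : ℝ)..s, ∫ x, (1 / 2 * G x + (-L)) ∂(ρ t)) ≤ J := by
    refine le_of_tendsto ((T1.sub T2).add T3) ?_
    filter_upwards [eventually_ge_atTop (2 * N + 1)] with n hn
    obtain ⟨hB, MF, hMF⟩ := C2_case hprob hnarrow hΨ hJ (cp n) (by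
      refine HasCompactSupport.intro (cut_hcs d n) fun x hx => ?_
      simp [image_eq_zero_of_notMem_tsupport hx]) hs
    have hmono := outer_mono hprob hnarrow (cq n) (F_cont hΨ (cp n)) (bq n) hMF (fun x => by
      refine le_trans ?_ (F_lower hΨ hm hε hL n x)
      have hcc : cut d N x ≤ cut d n x := by
        by_cases hx : ‖x‖ ≤ n + 1
        · rw [cut_one hx]; exact cut_le_one x
        · rw [cut_zero (n := N)]
          · exact cut_nonneg x
          · have : ((2 * N + 1 : ℕ) : ℝ) ≤ n := by exact_mod_cast hn
            push_cast at this
            linarith [not_le.mp hx]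
      have h3 : G x ≤ cut d n x * aa Ψ m ε x * ‖gradient Ψ x‖ ^ 2 :=
        mul_le_mul_of_nonneg_right (mul_le_mul_of_nonneg_right hcc (aa_nonneg hm hε x))
          (sq_nonneg _)
      linarith) hs
    linarith
  have cG' : Continuous (fun x => 1 / 2 * G x) := continuous_const.mul cG
  rw [outer_add hprob hnarrow (f := fun x => 1 / 2 * G x) (g := fun _ => -L) cG'
    continuous_const bG bL hs, outer_smul] at key
  have hconst : (∫ t in (0 : ℝ)..s, ∫ x, (-L) ∂(ρ t)) = s * (-L) := by
    have : (∫ t in (0 : ℝ)..s, ∫ x, (-L) ∂(ρ t)) = ∫ t in (0 : ℝ)..s, (-L) := by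
      refine intervalIntegral.integral_congr fun t ht => ?_
      rw [Set.uIcc_of_le hs.1] at ht
      have := hprob t ⟨ht.1, ht.2.trans hs.2⟩
      simp
    rw [this]
    simp
  rw [hconst] at key
  linarith

lemma fatou {α : Type*} [MeasurableSpace α] {μ : Measure α} {f : ℕ → α → ENNReal}
    {g : α → ENNReal} {c : ENNReal} (hf : ∀ n, AEMeasurable (f n) μ)
    (hg : ∀ᵐ x ∂μ, g x ≤ liminf (fun n => f n x) atTop) (hc : ∀ n, ∫⁻ x, f n x ∂μ ≤ c) :
    ∫⁻ x, g x ∂μ ≤ c := by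
  refine (lintegral_mono_ae hg).trans ((lintegral_liminf_le' hf).trans ?_)
  refine (liminf_le_liminf (Eventually.of_forall hc)).trans ?_
  simp

lemma uu_tendsto {d : ℕ} (Ψ : EuclideanSpace ℝ (Fin d) → ℝ) (m : ℝ)
    (x : EuclideanSpace ℝ (Fin d)) :
    Tendsto (fun n => uu Ψ m (sc n) x) atTop (𝓝 (Ψ x - m)) := by
  have h : Tendsto (fun n => 1 + sc n * (Ψ x - m)) atTop (𝓝 (1 + 0 * (Ψ x - m))) :=
    (sc_tendsto.mul_const _).const_add 1
  have h2 : Tendsto (fun n => uu Ψ m (sc n) x) atTop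
      (𝓝 ((Ψ x - m) / (1 + 0 * (Ψ x - m)))) := tendsto_const_nhds.div h (by simp)
  simpa using h2

lemma aa_tendsto {d : ℕ} (Ψ : EuclideanSpace ℝ (Fin d) → ℝ) (m : ℝ)
    (x : EuclideanSpace ℝ (Fin d)) :
    Tendsto (fun n => aa Ψ m (sc n) x) atTop (𝓝 1) := by
  have h : Tendsto (fun n => 1 + sc n * (Ψ x - m)) atTop (𝓝 (1 + 0 * (Ψ x - m))) :=
    (sc_tendsto.mul_const _).const_add 1
  have h2 : Tendsto (fun n => aa Ψ m (sc n) x) atTop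
      (𝓝 (1 / (1 + 0 * (Ψ x - m)) ^ 2)) := tendsto_const_nhds.div (h.pow 2) (by simp)
  simpa using h2

end QAux

/-- Under the hypotheses of Statement 3 (subquadratic convex `Ψ`,
narrowly continuous curve of probability measures, weak rate-functional bound `J`),
for every `δ ∈ (0,1]` with `α := 1/e - 5δC > 0` and with `β := 3/(4e) - 1/4 > 0`,
`α · sup_{t∈[0,δ]} ∫|Ψ| dρ_t + β · ∫_0^δ ∫|∇Ψ|² dρ_t dt
  ≤ 2J + (8/e)|inf Ψ| + (2/e) ∫Ψ dρ_0 + 2δ + (2δ/e)‖ΔΨ‖_∞`. -/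
theorem quantitative_absPsi_gradPsi_bound (d : ℕ) (Ψ : EuclideanSpace ℝ (Fin d) → ℝ)
    (hΨ : ContDiff ℝ 2 Ψ)
    (hconv : ConvexOn ℝ Set.univ Ψ)
    (hbelow : ∃ c : ℝ, ∀ x, c ≤ Ψ x)
    (hlap : ∃ Cl : ℝ, ∀ x, |lapl Ψ x| ≤ Cl)
    (C : ℝ) (hC : 0 < C) (hgrowth : ∀ x, ‖x‖ * ‖gradient Ψ x‖ ≤ C * (1 + ‖x‖ ^ 2))
    (ρ : ℝ → Measure (EuclideanSpace ℝ (Fin d)))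
    (hprob : ∀ t ∈ Set.Icc (0 : ℝ) 1, IsProbabilityMeasure (ρ t))
    (hnarrow : ∀ φ : BoundedContinuousFunction (EuclideanSpace ℝ (Fin d)) ℝ,
      ContinuousOn (fun t => ∫ x, φ x ∂(ρ t)) (Set.Icc (0 : ℝ) 1))
    (hΨint : Integrable Ψ (ρ 0))
    (J : ℝ)
    (hJ : ∀ p : EuclideanSpace ℝ (Fin d) → ℝ, ContDiff ℝ (⊤ : ℕ∞) p → HasCompactSupport p →
      ∀ s ∈ Set.Icc (0 : ℝ) 1,
        (∫ x, p x ∂(ρ s)) - (∫ x, p x ∂(ρ 0))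
          - (∫ t in (0 : ℝ)..s, (∫ x, lapl p x ∂(ρ t)))
          + (∫ t in (0 : ℝ)..s, (∫ x, ⟪gradient Ψ x, gradient p x⟫ ∂(ρ t)))
          - (1 / 2) * (∫ t in (0 : ℝ)..s, (∫ x, ‖gradient p x‖ ^ 2 ∂(ρ t))) ≤ J) :
    0 < 3 / (4 * Real.exp 1) - 1 / 4 ∧
    ∀ δ ∈ Set.Ioc (0 : ℝ) 1, 0 < 1 / Real.exp 1 - 5 * δ * C →
      ENNReal.ofReal (1 / Real.exp 1 - 5 * δ * C) *
          (⨆ t ∈ Set.Icc (0 : ℝ) δ, ∫⁻ x, ENNReal.ofReal |Ψ x| ∂(ρ t))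
        + ENNReal.ofReal (3 / (4 * Real.exp 1) - 1 / 4) *
          (∫⁻ t in Set.Icc (0 : ℝ) δ, ∫⁻ x, ENNReal.ofReal (‖gradient Ψ x‖ ^ 2) ∂(ρ t))
      ≤ ENNReal.ofReal (2 * J + (8 / Real.exp 1) * |⨅ x, Ψ x|
          + (2 / Real.exp 1) * (∫ x, Ψ x ∂(ρ 0)) + 2 * δ
          + (2 * δ / Real.exp 1) * (⨆ x, |lapl Ψ x|)) := by
  have he := Real.exp_pos 1
  have he3 : Real.exp 1 < 3 := Real.exp_one_lt_three
  have he2 : 2 < Real.exp 1 := by linarith [Real.exp_one_gt_d9]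
  have hβ : 0 < 3 / (4 * Real.exp 1) - 1 / 4 := by
    rw [sub_pos, div_lt_div_iff₀ (by norm_num) (by positivity)]
    linarith
  refine ⟨hβ, fun δ hδ hα => ?_⟩
  obtain ⟨c, hc⟩ := hbelow
  obtain ⟨Cl, hCl⟩ := hlap
  set m := ⨅ x, Ψ x with hmdef
  set L := ⨆ x, |lapl Ψ x| with hLdef
  have hm : ∀ x, m ≤ Ψ x := fun x => ciInf_le ⟨c, by rintro _ ⟨y, rfl⟩; exact hc y⟩ x
  have hL : ∀ x, |lapl Ψ x| ≤ L := fun x =>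
    le_ciSup (f := fun x => |lapl Ψ x|) ⟨Cl, by rintro _ ⟨y, rfl⟩; exact hCl y⟩ x
  have hL0 : 0 ≤ L := (abs_nonneg _).trans (hL 0)
  have h01 : (0 : ℝ) ∈ Set.Icc (0 : ℝ) 1 := by simp
  have hδ1 : δ ∈ Set.Icc (0 : ℝ) 1 := ⟨hδ.1.le, hδ.2⟩
  have hp0 := hprob 0 h01
  have hJ0 : 0 ≤ J := by
    have := hJ (fun _ => 0) contDiff_const HasCompactSupport.zero 0 h01
    simpa using this
  have hvint : Integrable (fun x => Ψ x - m) (ρ 0) := hΨint.sub (integrable_const m)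
  have hV : ∫ x, (Ψ x - m) ∂(ρ 0) = (∫ x, Ψ x ∂(ρ 0)) - m := by
    rw [integral_sub hΨint (integrable_const m)]
    simp
  have hV0 : 0 ≤ ∫ x, (Ψ x - m) ∂(ρ 0) := integral_nonneg fun x => sub_nonneg.2 (hm x)
  set B := J + δ * L + ∫ x, (Ψ x - m) ∂(ρ 0) with hB
  have hB0 : 0 ≤ B := by
    have := mul_nonneg hδ.1.le hL0
    linarith
  have hmain := fun (k : ℕ) (s : ℝ) (hs : s ∈ Set.Icc (0 : ℝ) 1) =>
    QAux.main_eps hprob hnarrow hΨ hC hgrowth hJ hm hL (QAux.sc_pos k) k hs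
  have hcu := fun k : ℕ => (QAux.uu_smooth hΨ hm (QAux.sc_pos k)).continuous
  have hbu : ∀ k x, |QAux.uu Ψ m (QAux.sc k) x| ≤ 1 / QAux.sc k := fun k x => by
    rw [abs_of_nonneg (QAux.uu_nonneg hm (QAux.sc_pos k) x)]
    exact QAux.uu_le hm (QAux.sc_pos k) x
  have hu0 : ∀ k, ∫ x, QAux.uu Ψ m (QAux.sc k) x ∂(ρ 0) ≤ ∫ x, (Ψ x - m) ∂(ρ 0) := fun k =>
    integral_mono (QAux.intg hprob (hcu k) (hbu k) h01) hvint
      (QAux.uu_le' hm (QAux.sc_pos k))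
  have hGnn : ∀ k x, 0 ≤ QAux.cut d k x * QAux.aa Ψ m (QAux.sc k) x * ‖gradient Ψ x‖ ^ 2 :=
    fun k x => mul_nonneg (mul_nonneg (QAux.cut_nonneg x)
      (QAux.aa_nonneg hm (QAux.sc_pos k) x)) (sq_nonneg _)
  have hunn : ∀ k x, 0 ≤ QAux.uu Ψ m (QAux.sc k) x := fun k x =>
    QAux.uu_nonneg hm (QAux.sc_pos k) x
  have hbound1 : ∀ k, ∀ s ∈ Set.Icc (0 : ℝ) δ, ∫ x, QAux.uu Ψ m (QAux.sc k) x ∂(ρ s) ≤ B := by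
    intro k s hs
    have h := (hmain k s ⟨hs.1, hs.2.trans hδ.2⟩).2.2
    have h2 := intervalIntegral.integral_nonneg (μ := volume) hs.1
      (fun t _ => integral_nonneg (μ := ρ t) (hGnn k))
    have h3 := mul_le_mul_of_nonneg_right hs.2 hL0
    linarith [hu0 k]
  have hbound2 : ∀ k, (∫ t in (0 : ℝ)..δ, ∫ x, QAux.cut d k x * QAux.aa Ψ m (QAux.sc k) x *
      ‖gradient Ψ x‖ ^ 2 ∂(ρ t)) ≤ 2 * B := by
    intro k
    have h := (hmain k δ hδ1).2.2
    have h2 := integral_nonneg (μ := ρ δ) (f := QAux.uu Ψ m (QAux.sc k)) (hunn k)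
    linarith [hu0 k]
  have hl1 : ∀ s ∈ Set.Icc (0 : ℝ) δ, ∫⁻ x, ENNReal.ofReal |Ψ x| ∂(ρ s) ≤
      ENNReal.ofReal (B + |m|) := by
    intro s hs
    have hs1 : s ∈ Set.Icc (0 : ℝ) 1 := ⟨hs.1, hs.2.trans hδ.2⟩
    have hps := hprob s hs1
    have hf : ∫⁻ x, ENNReal.ofReal (Ψ x - m) ∂(ρ s) ≤ ENNReal.ofReal B := by
      refine QAux.fatou (f := fun k x => ENNReal.ofReal (QAux.uu Ψ m (QAux.sc k) x))
        (fun k => (ENNReal.continuous_ofReal.comp (hcu k)).measurable.aemeasurable)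
        (Filter.Eventually.of_forall fun x => ?_) (fun k => ?_)
      · exact (((ENNReal.continuous_ofReal.tendsto _).comp
          (QAux.uu_tendsto Ψ m x)).liminf_eq).ge
      · rw [← ofReal_integral_eq_lintegral_ofReal (QAux.intg hprob (hcu k) (hbu k) hs1)
          (Filter.Eventually.of_forall (hunn k))]
        exact ENNReal.ofReal_le_ofReal (hbound1 k s hs)
    calc ∫⁻ x, ENNReal.ofReal |Ψ x| ∂(ρ s)
        ≤ ∫⁻ x, (ENNReal.ofReal (Ψ x - m) + ENNReal.ofReal |m|) ∂(ρ s) := by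
          refine lintegral_mono fun x => ?_
          rw [← ENNReal.ofReal_add (sub_nonneg.2 (hm x)) (abs_nonneg _)]
          refine ENNReal.ofReal_le_ofReal ?_
          have := abs_add_le (Ψ x - m) m
          rw [sub_add_cancel, abs_of_nonneg (sub_nonneg.2 (hm x))] at this
          exact this
      _ = (∫⁻ x, ENNReal.ofReal (Ψ x - m) ∂(ρ s)) + ENNReal.ofReal |m| := by
          rw [lintegral_add_right _ measurable_const]
          simp
      _ ≤ ENNReal.ofReal B + ENNReal.ofReal |m| := by gcongr
      _ = _ := (ENNReal.ofReal_add hB0 (abs_nonneg _)).symm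
  have hl2 : (∫⁻ t in Set.Icc (0 : ℝ) δ, ∫⁻ x, ENNReal.ofReal (‖gradient Ψ x‖ ^ 2) ∂(ρ t)) ≤
      ENNReal.ofReal (2 * B) := by
    have hsub : Set.Icc (0 : ℝ) δ ⊆ Set.Icc (0 : ℝ) 1 := Set.Icc_subset_Icc le_rfl hδ.2
    have hcG := fun k => (hmain k δ hδ1).1
    choose M hM using fun k => (hmain k δ hδ1).2.1
    have hco : ∀ k, ContinuousOn (fun t => ∫ x, QAux.cut d k x * QAux.aa Ψ m (QAux.sc k) x *
        ‖gradient Ψ x‖ ^ 2 ∂(ρ t)) (Set.Icc (0 : ℝ) δ) := fun k =>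
      (QAux.contOn hnarrow (hcG k) (hM k)).mono hsub
    have hae : ∀ k, ∀ t ∈ Set.Icc (0 : ℝ) δ,
        ENNReal.ofReal (∫ x, QAux.cut d k x * QAux.aa Ψ m (QAux.sc k) x *
          ‖gradient Ψ x‖ ^ 2 ∂(ρ t)) =
        ∫⁻ x, ENNReal.ofReal (QAux.cut d k x * QAux.aa Ψ m (QAux.sc k) x *
          ‖gradient Ψ x‖ ^ 2) ∂(ρ t) := fun k t ht =>
      ofReal_integral_eq_lintegral_ofReal (QAux.intg hprob (hcG k) (hM k) (hsub ht))
        (Filter.Eventually.of_forall (hGnn k))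
    refine QAux.fatou (f := fun k t => ENNReal.ofReal (∫ x, QAux.cut d k x *
      QAux.aa Ψ m (QAux.sc k) x * ‖gradient Ψ x‖ ^ 2 ∂(ρ t)))
      (fun k => ((hco k).aemeasurable measurableSet_Icc).ennreal_ofReal) ?_ (fun k => ?_)
    · filter_upwards [ae_restrict_mem measurableSet_Icc] with t ht
      simp only [hae _ t ht]
      refine le_trans (lintegral_mono fun x => ?_) (lintegral_liminf_le' fun k =>
        (ENNReal.continuous_ofReal.comp (hcG k)).measurable.aemeasurable)
      have ht1 : Filter.Tendsto (fun k => QAux.cut d k x * QAux.aa Ψ m (QAux.sc k) x *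
          ‖gradient Ψ x‖ ^ 2) Filter.atTop (nhds (‖gradient Ψ x‖ ^ 2)) := by
        simpa using ((QAux.cut_tendsto x).mul (QAux.aa_tendsto Ψ m x)).mul_const
          (‖gradient Ψ x‖ ^ 2)
      exact (((ENNReal.continuous_ofReal.tendsto _).comp ht1).liminf_eq).ge
    · rw [← ofReal_integral_eq_lintegral_ofReal
        ((hco k).integrableOn_compact isCompact_Icc)
        (Filter.Eventually.of_forall fun t => integral_nonneg (hGnn k))]
      refine ENNReal.ofReal_le_ofReal ?_
      rw [integral_Icc_eq_integral_Ioc, ← intervalIntegral.integral_of_le hδ.1.le]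
      exact hbound2 k
  calc _ ≤ ENNReal.ofReal (1 / Real.exp 1 - 5 * δ * C) * ENNReal.ofReal (B + |m|)
        + ENNReal.ofReal (3 / (4 * Real.exp 1) - 1 / 4) * ENNReal.ofReal (2 * B) := by
        gcongr
        exact iSup₂_le hl1
    _ = ENNReal.ofReal ((1 / Real.exp 1 - 5 * δ * C) * (B + |m|)
        + (3 / (4 * Real.exp 1) - 1 / 4) * (2 * B)) := by
        rw [← ENNReal.ofReal_mul hα.le, ← ENNReal.ofReal_mul hβ.le, ENNReal.ofReal_add]
        · have := abs_nonneg m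
          positivity
        · positivity
    _ ≤ _ := by
        refine ENNReal.ofReal_le_ofReal ?_
        have hq : 0 < 1 / Real.exp 1 := by positivity
        have hq1 : 1 / Real.exp 1 ≤ 1 := by
          rw [div_le_one he]; linarith
        have r1 : 3 / (4 * Real.exp 1) = 3 / 4 * (1 / Real.exp 1) := by ring
        have r2 : 8 / Real.exp 1 = 8 * (1 / Real.exp 1) := by ring
        have r3 : 2 / Real.exp 1 = 2 * (1 / Real.exp 1) := by ring
        have r4 : 2 * δ / Real.exp 1 = 2 * δ * (1 / Real.exp 1) := by ring
        rw [r1, r2, r3, r4]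
        generalize 1 / Real.exp 1 = q at *
        have s1 : (q - 5 * δ * C) * (B + |m|) ≤ q * (B + |m|) := by
          apply mul_le_mul_of_nonneg_right
          · have : 0 ≤ 5 * δ * C := by have := hδ.1; positivity
            linarith
          · have := abs_nonneg m
            linarith
        have s2 : (3 / 4 * q - 1 / 4) * (2 * B) ≤ q / 2 * (2 * B) := by
          apply mul_le_mul_of_nonneg_right _ (by linarith)
          linarith
        have s3 : q * B = q * J + q * (δ * L) + q * (∫ x, Ψ x ∂(ρ 0)) - q * m := by
          rw [hB, hV]; ring
        have s4 : q * J ≤ 1 * J := mul_le_mul_of_nonneg_right hq1 hJ0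
        have s5 : q * (-m) ≤ q * |m| := mul_le_mul_of_nonneg_left (neg_le_abs m) hq.le
        have s6 : 0 ≤ q * |m| := mul_nonneg hq.le (abs_nonneg _)
        nlinarith [s1, s2, s3, s4, s5, s6, hδ.1]
end

section
/- Let ρ_0 and ρ_1 be strictly positive, continuously differentiable probability densities on ℝ with finite Fisher informations I(ρ_0) and I(ρ_1), and let T ∈ C²(ℝ) satisfy T' > 0, T(x) = x for all |x| > M (for some M > 0), and the Monge–Ampère relation ρ_0(x) = ρ_1(T(x)) T'(x) for all x. For t ∈ [0,1] set T_t(x) = t x + (1−t) T(x) and ρ_t(x) = ρ_1(T_t(x)) T_t'(x). Then each ρ_t is a probability density and there exists a constant C, independent of t, such that for all t ∈ [0,1] the Fisher information of ρ_t satisfies ∫_ℝ (ρ_t'(x))²/ρ_t(x) dx ≤ C ( I(ρ_0) + I(ρ_1) ). In particular sup_{t∈[0,1]} I(ρ_t) < ∞. -/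
open MeasureTheory

lemma aux_bounds (M : ℝ) (T : ℝ → ℝ) (hT : ContDiff ℝ 2 T) (hT' : ∀ x, 0 < deriv T x)
    (hTid : ∀ x, M < |x| → T x = x) :
    ∃ m K L : ℝ, 0 < m ∧ m ≤ 1 ∧ 1 ≤ K ∧ 0 ≤ L ∧ ∀ x, m ≤ deriv T x ∧ deriv T x ≤ K ∧
      |deriv (deriv T) x| ≤ L := by
  have hd1 : ContDiff ℝ 1 (deriv T) := by
    have : ContDiff ℝ (1 + 1) T := by norm_num; exact hT
    exact (contDiff_succ_iff_deriv.1 this).2.2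
  have hc1 : Continuous (deriv T) := hd1.continuous
  have hc2 : Continuous (deriv (deriv T)) := hd1.continuous_deriv le_rfl
  have hout : ∀ x, M < |x| → deriv T x = 1 := by
    intro x hx
    have : T =ᶠ[nhds x] id := by
      filter_upwards [(isOpen_lt continuous_const continuous_abs).mem_nhds hx] with y hy
      exact hTid y hy
    rw [this.deriv_eq]; simp
  have hout2 : ∀ x, M < |x| → deriv (deriv T) x = 0 := by
    intro x hx
    have : deriv T =ᶠ[nhds x] fun _ => 1 := by
      filter_upwards [(isOpen_lt continuous_const continuous_abs).mem_nhds hx] with y hy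
      exact hout y hy
    rw [this.deriv_eq]; simp
  have hcpt : IsCompact (Set.Icc (-M) M) := isCompact_Icc
  obtain ⟨K, hK⟩ := hcpt.exists_bound_of_continuousOn hc1.continuousOn
  obtain ⟨L, hL⟩ := hcpt.exists_bound_of_continuousOn hc2.continuousOn
  obtain ⟨A, hA⟩ := hcpt.exists_bound_of_continuousOn
    (hc1.inv₀ (fun x => (hT' x).ne')).continuousOn
  have hA1 : 0 < max A 1 := by positivity
  refine ⟨(max A 1)⁻¹, max K 1, max L 0, by positivity,
    inv_le_one_of_one_le₀ (le_max_right _ _), le_max_right _ _, le_max_right _ _, ?_⟩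
  intro x
  by_cases hx : M < |x|
  · rw [hout x hx, hout2 x hx]
    exact ⟨inv_le_one_of_one_le₀ (le_max_right _ _), le_max_right _ _, by simp⟩
  · have hx' : x ∈ Set.Icc (-M) M := abs_le.1 (not_lt.1 hx)
    refine ⟨?_, ?_, ?_⟩
    · rw [inv_le_comm₀ hA1 (hT' x)]
      have := hA x hx'
      exact ((le_abs_self _).trans this).trans (le_max_left _ _)
    · exact ((le_abs_self _).trans (hK x hx')).trans (le_max_left _ _)
    · exact (hL x hx').trans (le_max_left _ _)

lemma aux_bij (M : ℝ) (S S' : ℝ → ℝ) (hS : ∀ x, HasDerivAt S (S' x) x) (hS' : ∀ x, 0 < S' x)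
    (hid : ∀ x, M < |x| → S x = x) : Function.Injective S ∧ Function.Surjective S := by
  refine ⟨(strictMono_of_deriv_pos fun x => by rw [(hS x).deriv]; exact hS' x).injective, ?_⟩
  have hc : Continuous S := continuous_iff_continuousAt.2 fun x => (hS x).continuousAt
  refine hc.surjective ?_ ?_
  · refine Filter.Tendsto.congr' ?_ Filter.tendsto_id
    filter_upwards [Filter.eventually_gt_atTop M] with x hx
    exact (hid x (hx.trans_le (le_abs_self x))).symm
  · refine Filter.Tendsto.congr' ?_ Filter.tendsto_id
    filter_upwards [Filter.eventually_lt_atBot (-M)] with x hx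
    exact (hid x (by have := neg_le_abs x; linarith)).symm

lemma aux_lint (M : ℝ) (S S' : ℝ → ℝ) (hS : ∀ x, HasDerivAt S (S' x) x) (hS' : ∀ x, 0 < S' x)
    (hid : ∀ x, M < |x| → S x = x) (g : ℝ → ENNReal) :
    ∫⁻ x, ENNReal.ofReal (S' x) * g (S x) = ∫⁻ x, g x := by
  obtain ⟨hi, hs⟩ := aux_bij M S S' hS hS' hid
  have := lintegral_image_eq_lintegral_abs_deriv_mul MeasurableSet.univ
    (fun x _ => (hS x).hasDerivWithinAt) hi.injOn g
  rw [Set.image_univ, hs.range_eq] at this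
  simpa [abs_of_pos (hS' _)] using this.symm

lemma aux_int (M : ℝ) (S S' : ℝ → ℝ) (hS : ∀ x, HasDerivAt S (S' x) x) (hS' : ∀ x, 0 < S' x)
    (hid : ∀ x, M < |x| → S x = x) (g : ℝ → ℝ) (hg : Integrable g) :
    Integrable (fun x => g (S x) * S' x) ∧ ∫ x, g (S x) * S' x = ∫ x, g x := by
  obtain ⟨hi, hs⟩ := aux_bij M S S' hS hS' hid
  have h1 := integral_image_eq_integral_abs_deriv_smul MeasurableSet.univ
    (fun x _ => (hS x).hasDerivWithinAt) hi.injOn g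
  have h2 := integrableOn_image_iff_integrableOn_abs_deriv_smul MeasurableSet.univ
    (fun x _ => (hS x).hasDerivWithinAt) hi.injOn g
  rw [Set.image_univ, hs.range_eq] at h1 h2
  simp only [abs_of_pos (hS' _), smul_eq_mul, integrableOn_univ, Measure.restrict_univ] at h1 h2
  simp only [mul_comm (g _)]
  exact ⟨h2.1 hg, h1.symm⟩

lemma aux_fisher_pos (ρ : ℝ → ℝ) (hpos : ∀ x, 0 < ρ x) (hC1 : ContDiff ℝ 1 ρ)
    (hmass : ∫ x, ρ x = 1) :
    (∫⁻ x, ENNReal.ofReal ((deriv ρ x) ^ 2 / ρ x)) ≠ 0 := by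
  intro h
  have hc : Continuous fun x => ENNReal.ofReal ((deriv ρ x) ^ 2 / ρ x) :=
    ENNReal.continuous_ofReal.comp
      (((hC1.continuous_deriv le_rfl).pow 2).div hC1.continuous fun x => (hpos x).ne')
  rw [lintegral_eq_zero_iff hc.measurable] at h
  have h' := (hc.ae_eq_iff_eq volume continuous_zero).1 h
  have hd : ∀ x, deriv ρ x = 0 := by
    intro x
    have := congrFun h' x
    simp only [Pi.zero_apply, ENNReal.ofReal_eq_zero] at this
    have h3 : (deriv ρ x) ^ 2 ≤ 0 := by
      have := (div_le_iff₀ (hpos x)).1 this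
      simpa using this
    nlinarith [sq_nonneg (deriv ρ x), pow_eq_zero_iff (two_ne_zero) |>.1 (le_antisymm h3 (sq_nonneg _))]
  have hconst : ρ = fun _ => ρ 0 := by
    funext x
    exact is_const_of_deriv_eq_zero (hC1.differentiable one_ne_zero) hd x 0
  rw [hconst] at hmass
  simp [Measure.real] at hmass

lemma aux_pt (r d s u m K L : ℝ) (hr : 0 < r) (hm : 0 < m) (hms : m ≤ s) (hsK : s ≤ K)
    (hu : |u| ≤ L) :
    (d * s * s + r * u) ^ 2 / (r * s) ≤
      s * (2 * K ^ 2 * (d ^ 2 / r)) + s * (2 * (L ^ 2 / m ^ 2) * r) := by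
  have hs : 0 < s := hm.trans_le hms
  have h1 : (d * s * s + r * u) ^ 2 / (r * s) ≤ 
      s * (2 * s ^ 2 * (d ^ 2 / r)) + s * (2 * (u ^ 2 / s ^ 2) * r) := by
    have : s * (2 * s ^ 2 * (d ^ 2 / r)) + s * (2 * (u ^ 2 / s ^ 2) * r)
      = (2 * (d * s * s) ^ 2 + 2 * (r * u) ^ 2) / (r * s) := by
      field_simp
    rw [this]
    gcongr
    nlinarith [sq_nonneg (d * s * s - r * u)]
  refine h1.trans ?_
  have hu2 : u ^ 2 ≤ L ^ 2 := by rw [← sq_abs]; gcongr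
  gcongr


/-- In the setting of Statement 9, with `T_t = t·id + (1-t)T` and
`ρ_t = (ρ₁ ∘ T_t)·T_t'` the Wasserstein geodesic from `ρ₀` to `ρ₁`, each `ρ_t` is a
probability density and there is a constant `C`, independent of `t ∈ [0,1]`, with
`I(ρ_t) ≤ C (I(ρ₀) + I(ρ₁))`; in particular `sup_{t∈[0,1]} I(ρ_t) < ∞`. -/
theorem fisher_along_geodesic_bound (ρ0 ρ1 : ℝ → ℝ)
    (h0pos : ∀ x, 0 < ρ0 x) (h0C1 : ContDiff ℝ 1 ρ0)
    (h0int : Integrable ρ0) (h0mass : ∫ x, ρ0 x = 1)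
    (h0fisher : (∫⁻ x, ENNReal.ofReal ((deriv ρ0 x) ^ 2 / ρ0 x)) < ⊤)
    (h1pos : ∀ x, 0 < ρ1 x) (h1C1 : ContDiff ℝ 1 ρ1)
    (h1int : Integrable ρ1) (h1mass : ∫ x, ρ1 x = 1)
    (h1fisher : (∫⁻ x, ENNReal.ofReal ((deriv ρ1 x) ^ 2 / ρ1 x)) < ⊤)
    (M : ℝ) (hM : 0 < M)
    (T : ℝ → ℝ) (hT : ContDiff ℝ 2 T) (hT' : ∀ x, 0 < deriv T x)
    (hTid : ∀ x, M < |x| → T x = x)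
    (hMA : ∀ x, ρ0 x = ρ1 (T x) * deriv T x)
    (ρfam : ℝ → ℝ → ℝ)
    (hρfam : ∀ t x, ρfam t x
      = ρ1 (t * x + (1 - t) * T x) * deriv (fun y => t * y + (1 - t) * T y) x) :
    (∀ t ∈ Set.Icc (0 : ℝ) 1,
      (∀ x, 0 ≤ ρfam t x) ∧ Integrable (ρfam t) ∧ (∫ x, ρfam t x) = 1) ∧
    (∃ C : ℝ, ∀ t ∈ Set.Icc (0 : ℝ) 1,
      (∫⁻ x, ENNReal.ofReal ((deriv (ρfam t) x) ^ 2 / ρfam t x)) ≤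
        ENNReal.ofReal C *
          ((∫⁻ x, ENNReal.ofReal ((deriv ρ0 x) ^ 2 / ρ0 x))
            + ∫⁻ x, ENNReal.ofReal ((deriv ρ1 x) ^ 2 / ρ1 x))) ∧
    (⨆ t ∈ Set.Icc (0 : ℝ) 1,
      ∫⁻ x, ENNReal.ofReal ((deriv (ρfam t) x) ^ 2 / ρfam t x)) < ⊤ := by

  obtain ⟨m, K, L, hm, hm1, hK1, hL, hb⟩ := aux_bounds M T hT hT' hTid
  have hd1 : ContDiff ℝ 1 (deriv T) := by
    have : ContDiff ℝ (1 + 1) T := by norm_num; exact hT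
    exact (contDiff_succ_iff_deriv.1 this).2.2
  have hTd : ∀ x, HasDerivAt T (deriv T x) x := fun x =>
    (hT.differentiable two_ne_zero x).hasDerivAt
  have hTd2 : ∀ x, HasDerivAt (deriv T) (deriv (deriv T) x) x := fun x =>
    (hd1.differentiable one_ne_zero x).hasDerivAt
  have hS : ∀ t x, HasDerivAt (fun y => t * y + (1 - t) * T y) (t + (1 - t) * deriv T x) x := by
    intro t x
    have h := ((hasDerivAt_id' x).const_mul t).add ((hTd x).const_mul (1 - t))
    rw [mul_one] at h
    exact h
  have hS2 : ∀ t x, HasDerivAt (fun y => t + (1 - t) * deriv T y)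
      ((1 - t) * deriv (deriv T) x) x := by
    intro t x
    simpa using ((hTd2 x).const_mul (1 - t)).const_add t
  have hfam : ∀ t, ρfam t = fun x => ρ1 (t * x + (1 - t) * T x) * (t + (1 - t) * deriv T x) := by
    intro t
    funext x
    rw [hρfam, (hS t x).deriv]
  have hlow : ∀ t ∈ Set.Icc (0 : ℝ) 1, ∀ x, m ≤ t + (1 - t) * deriv T x := by
    rintro t ⟨ht0, ht1⟩ x
    nlinarith [(hb x).1]
  have hup : ∀ t ∈ Set.Icc (0 : ℝ) 1, ∀ x, t + (1 - t) * deriv T x ≤ K := by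
    rintro t ⟨ht0, ht1⟩ x
    nlinarith [(hb x).2.1]
  have hsec : ∀ t ∈ Set.Icc (0 : ℝ) 1, ∀ x, |(1 - t) * deriv (deriv T) x| ≤ L := by
    rintro t ⟨ht0, ht1⟩ x
    rw [abs_mul, abs_of_nonneg (by linarith)]
    nlinarith [(hb x).2.2, abs_nonneg (deriv (deriv T) x)]
  have hSid : ∀ t x, M < |x| → t * x + (1 - t) * T x = x := by
    intro t x hx
    rw [hTid x hx]; ring
  have hderiv : ∀ t x, deriv (ρfam t) x
      = deriv ρ1 (t * x + (1 - t) * T x) * (t + (1 - t) * deriv T x) * (t + (1 - t) * deriv T x)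
        + ρ1 (t * x + (1 - t) * T x) * ((1 - t) * deriv (deriv T) x) := by
    intro t x
    rw [hfam]
    have h := (h1C1.differentiable one_ne_zero (t * x + (1 - t) * T x)).hasDerivAt
    exact ((HasDerivAt.comp x h (hS t x)).mul (hS2 t x)).deriv
  have hIpos := aux_fisher_pos ρ1 h1pos h1C1 h1mass
  set I0 := ∫⁻ x, ENNReal.ofReal ((deriv ρ0 x) ^ 2 / ρ0 x) with hI0
  set I1 := ∫⁻ x, ENNReal.ofReal ((deriv ρ1 x) ^ 2 / ρ1 x) with hI1
  have hmassE : ∫⁻ x, ENNReal.ofReal (ρ1 x) = 1 := by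
    rw [← ofReal_integral_eq_lintegral_ofReal h1int
      (Filter.Eventually.of_forall fun x => (h1pos x).le), h1mass, ENNReal.ofReal_one]
  have hmain : ∀ t ∈ Set.Icc (0 : ℝ) 1,
      (∫⁻ x, ENNReal.ofReal ((deriv (ρfam t) x) ^ 2 / ρfam t x)) ≤
        ENNReal.ofReal (2 * K ^ 2) * I1 + ENNReal.ofReal (2 * (L ^ 2 / m ^ 2)) := by
    intro t ht
    have hSpos : ∀ x, 0 < t + (1 - t) * deriv T x := fun x => hm.trans_le (hlow t ht x)
    have hcv := aux_lint M _ _ (hS t) hSpos (hSid t)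
    have hmeas1 : Measurable fun x => ENNReal.ofReal ((deriv ρ1 x) ^ 2 / ρ1 x) :=
      ((((h1C1.continuous_deriv le_rfl).pow 2).div h1C1.continuous
        fun x => (h1pos x).ne').measurable).ennreal_ofReal
    calc (∫⁻ x, ENNReal.ofReal ((deriv (ρfam t) x) ^ 2 / ρfam t x))
        ≤ ∫⁻ x, ENNReal.ofReal (t + (1 - t) * deriv T x) *
            (fun y => ENNReal.ofReal (2 * K ^ 2) * ENNReal.ofReal ((deriv ρ1 y) ^ 2 / ρ1 y)
              + ENNReal.ofReal (2 * (L ^ 2 / m ^ 2)) * ENNReal.ofReal (ρ1 y))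
              (t * x + (1 - t) * T x) := by
          refine lintegral_mono fun x => ?_
          have hr := h1pos (t * x + (1 - t) * T x)
          have hs := hSpos x
          have hp := aux_pt (ρ1 (t * x + (1 - t) * T x)) (deriv ρ1 (t * x + (1 - t) * T x))
            (t + (1 - t) * deriv T x) ((1 - t) * deriv (deriv T) x) m K L hr hm
            (hlow t ht x) (hup t ht x) (hsec t ht x)
          simp only [hderiv]
          rw [hfam]
          refine (ENNReal.ofReal_le_ofReal hp).trans (le_of_eq ?_)
          rw [← ENNReal.ofReal_mul (by positivity), ← ENNReal.ofReal_mul (by positivity),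
            ← ENNReal.ofReal_add (by positivity) (by positivity),
            ← ENNReal.ofReal_mul hs.le]
          congr 1
          ring
      _ = ∫⁻ y, (ENNReal.ofReal (2 * K ^ 2) * ENNReal.ofReal ((deriv ρ1 y) ^ 2 / ρ1 y)
              + ENNReal.ofReal (2 * (L ^ 2 / m ^ 2)) * ENNReal.ofReal (ρ1 y)) :=
          hcv (fun y => ENNReal.ofReal (2 * K ^ 2) * ENNReal.ofReal ((deriv ρ1 y) ^ 2 / ρ1 y)
              + ENNReal.ofReal (2 * (L ^ 2 / m ^ 2)) * ENNReal.ofReal (ρ1 y))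
      _ = _ := by
          rw [lintegral_add_left (hmeas1.const_mul _),
            lintegral_const_mul _ hmeas1,
            lintegral_const_mul _ h1C1.continuous.measurable.ennreal_ofReal, hmassE, mul_one]
  refine ⟨?_, ?_, ?_⟩
  · intro t ht
    have hSpos : ∀ x, 0 < t + (1 - t) * deriv T x := fun x => hm.trans_le (hlow t ht x)
    have h := aux_int M _ _ (hS t) hSpos (hSid t) ρ1 h1int
    rw [hfam]
    exact ⟨fun x => (mul_pos (h1pos _) (hSpos x)).le, h.1, h.2.trans h1mass⟩
  · refine ⟨2 * K ^ 2 + 2 * (L ^ 2 / m ^ 2) / I1.toReal, fun t ht => (hmain t ht).trans ?_⟩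
    have hI1r : 0 < I1.toReal := ENNReal.toReal_pos hIpos h1fisher.ne
    have hle : ENNReal.ofReal (2 * K ^ 2) * I1 + ENNReal.ofReal (2 * (L ^ 2 / m ^ 2))
        = ENNReal.ofReal (2 * K ^ 2 + 2 * (L ^ 2 / m ^ 2) / I1.toReal) * I1 := by
      rw [ENNReal.ofReal_add (by positivity) (by positivity), add_mul,
        ENNReal.ofReal_div_of_pos hI1r, ENNReal.ofReal_toReal h1fisher.ne,
        ENNReal.div_mul_cancel hIpos h1fisher.ne]
    rw [hle]
    gcongr
    exact le_add_self
  · refine (iSup₂_le hmain).trans_lt ?_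
    exact ENNReal.add_lt_top.2 ⟨ENNReal.mul_lt_top ENNReal.ofReal_lt_top h1fisher,
      ENNReal.ofReal_lt_top⟩
end
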